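/- arXiv:2605.07349 — 6 statements merged into one kernel-verified Lean document; each statement's English description precedes it below -/
import Mathlib

section
/- Let ρ > χ > 1. If there exists a ρ-robust χ-consistent randomized online bidding strategy, then there exists a (ρ,χ)-bidding profile. -/
/-!
Let `ν` be the intensity measure of the random bids and let `N T` be the signed expected number of
bids between `1` and `T`. The profile is the generalized inverse `G t = inf {T > 0 | t ≤ N T}`
of `N`.

Finiteness of the costs forces the bids to tend to `0` and to `∞` almost surely, so `N` is finite on
`(0, ∞)` and unbounded in both directions; hence `G` is well defined, positive, monotone and
left-continuous. The offset condition says that `N 1 = 0` and that `N` is left-continuous at `1`.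

Robustness and consistency both follow from `∫_{-∞}^{N T + 1} G ≤ cost T`. By the layer-cake formula,
the left side is at most `∫_0^∞ (N T + 1 - N s)⁺ ds` (`lintegral_posInverse_le`), while the cost is
`∫_0^∞ E #{n | Q (n - 1) < T, s ≤ Q n} ds` (`bidCost_layercake`). The integrands are compared for
each `s` (`lintegral_bidCount_le`): almost surely exactly one bid is the first to reach `T`, and every
bid in `[s, T)` is counted as well when `s ≤ T`, whereas for `T < s` the first bid to reach `T` is
counted unless it lies in `[T, s)`.
-/

open MeasureTheory Set
open scoped ENNReal

/-- The expected cost of a randomized online bidding strategy `μ` at target `T`: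
`E_μ[∑_{n∈ℤ} Q_n · 1{Q_{n−1} < T}]`. -/
noncomputable def bidCost (μ : Measure (ℤ → ℝ)) (T : ℝ) : ℝ≥0∞ :=
  ∫⁻ Q, ∑' n : ℤ, (if Q (n - 1) < T then ENNReal.ofReal (Q n) else 0) ∂μ

/-- A randomized online bidding strategy: a probability measure on bid sequences that are
almost surely positive and strictly increasing. -/
def IsBidStrategy (μ : Measure (ℤ → ℝ)) : Prop :=
  IsProbabilityMeasure μ ∧ ∀ᵐ Q ∂μ, (∀ n : ℤ, 0 < Q n) ∧ StrictMono Q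

/-- A `(ρ,χ)`-bidding profile: a non-decreasing, left-continuous, strictly positive
function `G : ℝ → ℝ` satisfying the offset, robustness and consistency conditions. -/
def BiddingProfile (ρ χ : ℝ) (G : ℝ → ℝ) : Prop :=
  Monotone G ∧
  (∀ x : ℝ, ContinuousWithinAt G (Set.Iic x) x) ∧
  (∀ x : ℝ, 0 < G x) ∧
  (∀ x < (0 : ℝ), G x < 1) ∧
  (∀ x > (0 : ℝ), 1 ≤ G x) ∧
  (∀ x : ℝ, (∫⁻ t in Set.Iic (x + 1), ENNReal.ofReal (G t)) ≤ ENNReal.ofReal (ρ * G x)) ∧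
  (∫⁻ t in Set.Iic (1 : ℝ), ENNReal.ofReal (G t)) ≤ ENNReal.ofReal χ

/-- The random bids `Q n`, viewed as a point process on the line, have this intensity measure:
`bidIntensity μ B` is the expected number of bids lying in `B`. -/
noncomputable def bidIntensity (μ : Measure (ℤ → ℝ)) : Measure ℝ :=
  Measure.sum fun n : ℤ => μ.map fun Q => Q n

/-- The signed expected number of bids between `1` and `T`: it equals `ν [1, T)` for `1 ≤ T` and
`-ν [T, 1)` for `T ≤ 1`, where `ν` is the intensity measure. One of the two intervals is
always empty. -/
noncomputable def bidCount (μ : Measure (ℤ → ℝ)) (T : ℝ) : ℝ :=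
  (bidIntensity μ (Ico 1 T)).toReal - (bidIntensity μ (Ico T 1)).toReal

/-- The generalized inverse of a function `N` on the positive reals. -/
noncomputable def posInverse (N : ℝ → ℝ) (t : ℝ) : ℝ :=
  sInf {T | 0 < T ∧ t ≤ N T}

/-! ### Generalized inverses -/

section Inverse

variable {N : ℝ → ℝ}

lemma posInverse_bddBelow (t : ℝ) : BddBelow {T | 0 < T ∧ t ≤ N T} :=
  ⟨0, fun _ h => h.1.le⟩

lemma posInverse_le {t T : ℝ} (hT : 0 < T) (h : t ≤ N T) : posInverse N t ≤ T :=
  csInf_le (posInverse_bddBelow t) ⟨hT, h⟩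

lemma le_posInverse (hmono : ∀ a b, 0 < a → a ≤ b → N a ≤ N b)
    (htop : ∀ x, ∃ T, 0 < T ∧ x ≤ N T) {t s : ℝ} (hst : N s < t) :
    s ≤ posInverse N t := by
  refine le_csInf (htop t) fun T hT => ?_
  by_contra! hlt
  exact absurd (hmono T s hT.1 hlt.le) (not_le.2 (hst.trans_le hT.2))

lemma posInverse_pos (hmono : ∀ a b, 0 < a → a ≤ b → N a ≤ N b)
    (htop : ∀ x, ∃ T, 0 < T ∧ x ≤ N T) (hbot : ∀ x, ∃ T, 0 < T ∧ N T < x) (t : ℝ) :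
    0 < posInverse N t := by
  obtain ⟨T, hT, h⟩ := hbot t
  exact hT.trans_le (le_posInverse hmono htop h)

lemma posInverse_mono (htop : ∀ x, ∃ T, 0 < T ∧ x ≤ N T) : Monotone (posInverse N) :=
  fun _ b hab => csInf_le_csInf (posInverse_bddBelow _) (htop b)
    fun _ hT => ⟨hT.1, hab.trans hT.2⟩

lemma posInverse_leftCont (hmono : ∀ a b, 0 < a → a ≤ b → N a ≤ N b)
    (htop : ∀ x, ∃ T, 0 < T ∧ x ≤ N T) (hbot : ∀ x, ∃ T, 0 < T ∧ N T < x) (x : ℝ) :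
    ContinuousWithinAt (posInverse N) (Iic x) x := by
  refine tendsto_order.2 ⟨fun a ha => ?_, fun a ha => ?_⟩
  · obtain ⟨s, hs, hsx⟩ := exists_between (max_lt ha (posInverse_pos hmono htop hbot x))
    have hs0 : 0 < s := (le_max_right _ _).trans_lt hs
    have hNs : N s < x := by
      by_contra! h
      exact absurd (posInverse_le hs0 h) (not_le.2 hsx)
    filter_upwards [mem_nhdsWithin_of_mem_nhds (Ioi_mem_nhds hNs)] with t ht
    exact ((le_max_left _ _).trans_lt hs).trans_le (le_posInverse hmono htop ht)
  · filter_upwards [self_mem_nhdsWithin] with t ht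
    exact (posInverse_mono htop ht).trans_lt ha

/-- Layer-cake bound: the superlevel set `{t ≤ y | s < posInverse N t}` is contained
in `(N s, y]`. -/
lemma lintegral_posInverse_le (hmono : ∀ a b, 0 < a → a ≤ b → N a ≤ N b)
    (htop : ∀ x, ∃ T, 0 < T ∧ x ≤ N T) (hbot : ∀ x, ∃ T, 0 < T ∧ N T < x) (y : ℝ) :
    ∫⁻ t in Iic y, ENNReal.ofReal (posInverse N t)
      ≤ ∫⁻ s in Ioi (0 : ℝ), ENNReal.ofReal (y - N s) := by
  rw [lintegral_eq_lintegral_meas_lt _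
    (ae_of_all _ fun t => (posInverse_pos hmono htop hbot t).le)
    (posInverse_mono htop).measurable.aemeasurable]
  refine setLIntegral_mono' measurableSet_Ioi fun s hs => ?_
  have hms : MeasurableSet {t | s < posInverse N t} :=
    (posInverse_mono htop).measurable measurableSet_Ioi
  rw [Measure.restrict_apply hms, ← Real.volume_Ioc]
  refine measure_mono fun t ht => ⟨?_, ht.2⟩
  by_contra! h
  exact absurd (posInverse_le hs h) (not_le.2 ht.1)

end Inverse

/-! ### Sample paths -/

/-- A positive increasing bid sequence with finite cost at arbitrarily large targets has
bids tending to `0` and to `∞`: otherwise some finite-cost sum would contain infinitely many terms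
bounded below. -/
lemma path_unbounded {Q : ℤ → ℝ} (hpos : ∀ n, 0 < Q n) (hQ : StrictMono Q)
    (hfin : ∀ k : ℕ, (∑' n : ℤ, (if Q (n - 1) < k + 1 then ENNReal.ofReal (Q n) else 0)) ≠ ⊤) :
    (∀ T, ∃ n, T ≤ Q n) ∧ (∀ T, 0 < T → ∃ n, Q n < T) := by
  constructor
  · intro T
    by_contra! h
    obtain ⟨k, hk⟩ := exists_nat_ge T
    have := ENNReal.finite_const_le_of_tsum_ne_top (hfin k)
      (ε := ENNReal.ofReal (Q 0)) (by simpa using hpos 0)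
    refine (Ici_infinite (0 : ℤ)) (this.subset fun n hn => ?_)
    have h1 : Q (n - 1) < k + 1 := by linarith [h (n - 1)]
    simp only [mem_ofPred_eq, h1, if_true]
    exact ENNReal.ofReal_le_ofReal (hQ.monotone hn)
  · intro T hT
    by_contra! h
    obtain ⟨k, hk⟩ := exists_nat_ge (Q 0)
    have := ENNReal.finite_const_le_of_tsum_ne_top (hfin k)
      (ε := ENNReal.ofReal T) (by simpa using hT)
    refine (Iic_infinite (0 : ℤ)) (this.subset fun n hn => ?_)
    have hn' : n ≤ 0 := hn
    have h1 : Q (n - 1) < k + 1 := by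
      have := hQ.monotone (show n - 1 ≤ 0 by lia)
      linarith
    simp only [mem_ofPred_eq, h1, if_true]
    exact ENNReal.ofReal_le_ofReal (h n)

lemma path_crossing {Q : ℤ → ℝ} (hQ : StrictMono Q) {T : ℝ}
    (h1 : ∃ n, T ≤ Q n) (h2 : ∃ n, Q n < T) : ∃ m, Q (m - 1) < T ∧ T ≤ Q m := by
  obtain ⟨a, ha⟩ := h2
  obtain ⟨m, hm, hmin⟩ := Int.exists_least_of_bdd (P := fun n => T ≤ Q n)
    ⟨a, fun z hz => (hQ.lt_iff_lt.1 (ha.trans_le hz)).le⟩ h1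
  refine ⟨m, ?_, hm⟩
  by_contra! h
  have := hmin _ h
  lia

lemma tsum_indicator_eq_top {p : ℤ → Prop} [DecidablePred p] (hp : {n | p n}.Infinite) :
    ∑' n : ℤ, (if p n then (1 : ℝ≥0∞) else 0) = ⊤ := by
  by_contra h
  refine hp ((ENNReal.finite_const_le_of_tsum_ne_top h one_ne_zero).subset fun n hn => ?_)
  have : p n := hn
  simp [this]

/-- For `s ≤ T`, a bid bought at target `T` and of size at least `s` is either one of the bids
in `[s, T)` or the first bid reaching `T`. -/
lemma path_count_low {Q : ℤ → ℝ} (hQ : StrictMono Q) {T s : ℝ} (hsT : s ≤ T)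
    (hm : ∃ m, Q (m - 1) < T ∧ T ≤ Q m) :
    (∑' n : ℤ, (if Q n ∈ Ico s T then (1 : ℝ≥0∞) else 0)) + 1
      ≤ ∑' n : ℤ, (if Q (n - 1) < T ∧ s ≤ Q n then (1 : ℝ≥0∞) else 0) := by
  obtain ⟨m, hm1, hm2⟩ := hm
  rw [← tsum_ite_eq m (fun _ => (1 : ℝ≥0∞)), ← ENNReal.tsum_add]
  refine ENNReal.tsum_le_tsum fun n => ?_
  by_cases hn : n = m
  · subst hn
    simp [hm1, not_lt.2 hm2, hsT.trans hm2]
  · by_cases h : Q n ∈ Ico s T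
    · have : Q (n - 1) < T := (hQ (by lia)).trans h.2
      simp [hn, h.1, h.2, this]
    · simp [hn, h]

/-- The first bid reaching `T` is either smaller than `s` or at least `s`. -/
lemma path_count_high {Q : ℤ → ℝ} {T s : ℝ} (hm : ∃ m, Q (m - 1) < T ∧ T ≤ Q m) :
    1 ≤ (∑' n : ℤ, (if Q (n - 1) < T ∧ s ≤ Q n then (1 : ℝ≥0∞) else 0)) +
      ∑' n : ℤ, (if Q n ∈ Ico T s then (1 : ℝ≥0∞) else 0) := by
  obtain ⟨m, hm1, hm2⟩ := hm
  rw [← ENNReal.tsum_add]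
  refine le_trans ?_ (ENNReal.le_tsum m)
  by_cases h : s ≤ Q m
  · simp [hm1, h]
  · simp [hm2, not_le.1 h]

/-! ### The intensity measure -/

lemma bidIntensity_apply (μ : Measure (ℤ → ℝ)) {B : Set ℝ} (hB : MeasurableSet B)
    [DecidablePred (· ∈ B)] :
    bidIntensity μ B = ∫⁻ Q, ∑' n : ℤ, (if Q n ∈ B then (1 : ℝ≥0∞) else 0) ∂μ := by
  rw [bidIntensity, Measure.sum_apply _ hB, lintegral_tsum]
  · congr 1
    ext n
    rw [Measure.map_apply (measurable_pi_apply n) hB,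
      ← lintegral_indicator_one (measurable_pi_apply n hB)]
    refine lintegral_congr fun Q => ?_
    by_cases h : Q n ∈ B <;> simp [h]
  · intro n
    exact (Measurable.ite (measurable_pi_apply n hB) measurable_const
      measurable_const).aemeasurable

lemma measurable_costTerm (T : ℝ) (n : ℤ) :
    Measurable fun Q : ℤ → ℝ => if Q (n - 1) < T then ENNReal.ofReal (Q n) else 0 :=
  Measurable.ite (measurableSet_lt (measurable_pi_apply _) measurable_const)
    (measurable_pi_apply n).ennreal_ofReal measurable_const

/-- Almost sure path properties of a strategy with finite expected costs. -/
lemma ae_path {μ : Measure (ℤ → ℝ)} (hμ : IsBidStrategy μ)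
    (hfin : ∀ T > 0, bidCost μ T ≠ ⊤) :
    ∀ᵐ Q ∂μ, StrictMono Q ∧ (∀ T, ∃ n, T ≤ Q n) ∧ (∀ T, 0 < T → ∃ n, Q n < T) := by
  have h1 : ∀ᵐ Q ∂μ, ∀ k : ℕ,
      (∑' n : ℤ, (if Q (n - 1) < (k : ℝ) + 1 then ENNReal.ofReal (Q n) else 0)) < ⊤ :=
    ae_all_iff.2 fun k => ae_lt_top (Measurable.tsum (measurable_costTerm _))
      (hfin (k + 1) (by positivity))
  filter_upwards [hμ.2, h1] with Q hQ hk
  exact ⟨hQ.2, path_unbounded hQ.1 hQ.2 fun k => (hk k).ne⟩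

lemma bidIntensity_Ico_ne_top {μ : Measure (ℤ → ℝ)} (hμ : IsBidStrategy μ)
    (hfin : ∀ T > 0, bidCost μ T ≠ ⊤) {a : ℝ} (ha : 0 < a) (b : ℝ) :
    bidIntensity μ (Ico a b) ≠ ⊤ := by
  rcases le_or_gt b a with hab | hab
  · simp [Ico_eq_empty_of_le hab]
  have key : ENNReal.ofReal a * bidIntensity μ (Ico a b) ≤ bidCost μ b := by
    rw [bidIntensity_apply μ measurableSet_Ico, ← lintegral_const_mul' _ _ ENNReal.ofReal_ne_top]
    refine lintegral_mono_ae ?_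
    filter_upwards [hμ.2] with Q hQ
    rw [← ENNReal.tsum_mul_left]
    refine ENNReal.tsum_le_tsum fun n => ?_
    by_cases h : Q n ∈ Ico a b
    · have h1 : Q (n - 1) < b := (hQ.2 (by lia)).trans h.2
      simpa [h1, h.1, h.2] using ENNReal.ofReal_le_ofReal h.1
    · simp [h]
  intro htop
  rw [htop, ENNReal.mul_top (by simpa using ha)] at key
  exact hfin b (ha.trans hab) (top_le_iff.1 key)

lemma bidIntensity_Ici {μ : Measure (ℤ → ℝ)} (hμ : IsBidStrategy μ)
    (hfin : ∀ T > 0, bidCost μ T ≠ ⊤) : bidIntensity μ (Ici 1) = ⊤ := by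
  have := hμ.1
  rw [bidIntensity_apply μ measurableSet_Ici, lintegral_congr_ae (g := fun _ => ⊤)]
  · simp
  filter_upwards [ae_path hμ hfin] with Q ⟨hQ, h1, _⟩
  obtain ⟨m, hm⟩ := h1 1
  exact tsum_indicator_eq_top ((Ici_infinite m).mono fun n hn => hm.trans (hQ.monotone hn))

lemma bidIntensity_Ioo {μ : Measure (ℤ → ℝ)} (hμ : IsBidStrategy μ)
    (hfin : ∀ T > 0, bidCost μ T ≠ ⊤) : bidIntensity μ (Ioo 0 1) = ⊤ := by
  have := hμ.1
  rw [bidIntensity_apply μ measurableSet_Ioo, lintegral_congr_ae (g := fun _ => ⊤)]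
  · simp
  filter_upwards [ae_path hμ hfin, hμ.2] with Q ⟨hQ, _, h2⟩ hpos
  obtain ⟨m, hm⟩ := h2 1 one_pos
  exact tsum_indicator_eq_top
    ((Iic_infinite m).mono fun n hn => ⟨hpos.1 n, (hQ.monotone hn).trans_lt hm⟩)

/-! ### The counting function -/

lemma bidCount_one (μ : Measure (ℤ → ℝ)) : bidCount μ 1 = 0 := by
  simp [bidCount]

lemma bidCount_sub {μ : Measure (ℤ → ℝ)} (hμ : IsBidStrategy μ)
    (hfin : ∀ T > 0, bidCost μ T ≠ ⊤) {a b : ℝ} (ha : 0 < a) (hab : a ≤ b) :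
    bidCount μ b - bidCount μ a = (bidIntensity μ (Ico a b)).toReal := by
  have hadd : ∀ x y z : ℝ, 0 < x → x ≤ y → y ≤ z → (bidIntensity μ (Ico x z)).toReal =
      (bidIntensity μ (Ico x y)).toReal + (bidIntensity μ (Ico y z)).toReal := by
    intro x y z hx hxy hyz
    rw [← Ico_union_Ico_eq_Ico hxy hyz, measure_union _ measurableSet_Ico,
      ENNReal.toReal_add (bidIntensity_Ico_ne_top hμ hfin hx _)
        (bidIntensity_Ico_ne_top hμ hfin (hx.trans_le hxy) _)]
    exact Ico_disjoint_Ico_same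
  have hempty : ∀ x y : ℝ, y ≤ x → (bidIntensity μ (Ico x y)).toReal = 0 := by
    intro x y h
    simp [Ico_eq_empty_of_le h]
  unfold bidCount
  rcases le_total a 1 with h1 | h1 <;> rcases le_total b 1 with h2 | h2
  · rw [hempty 1 b h2, hempty 1 a h1, hadd a b 1 ha hab h2]; ring
  · rw [hempty b 1 h2, hempty 1 a h1, hadd a 1 b ha h1 h2]; ring
  · rw [hempty 1 b h2, hempty a 1 h1, hempty b 1 (h1.trans hab), hempty 1 a (hab.trans h2),
      hempty a b (h2.trans h1)]; ring
  · rw [hempty b 1 h2, hempty a 1 h1, hadd 1 a b one_pos h1 hab]; ring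

lemma bidCount_mono {μ : Measure (ℤ → ℝ)} (hμ : IsBidStrategy μ)
    (hfin : ∀ T > 0, bidCost μ T ≠ ⊤) (a b : ℝ) (ha : 0 < a) (hab : a ≤ b) :
    bidCount μ a ≤ bidCount μ b := by
  have := bidCount_sub hμ hfin ha hab
  linarith [ENNReal.toReal_nonneg (a := bidIntensity μ (Ico a b))]

lemma bidCount_top {μ : Measure (ℤ → ℝ)} (hμ : IsBidStrategy μ)
    (hfin : ∀ T > 0, bidCost μ T ≠ ⊤) (x : ℝ) : ∃ T, 0 < T ∧ x ≤ bidCount μ T := by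
  have hU : ⋃ k : ℕ, Ico (1 : ℝ) (k + 1) = Ici 1 := by
    ext y
    simp only [mem_iUnion, mem_Ico, mem_Ici, exists_and_left, and_iff_left_iff_imp]
    intro _
    obtain ⟨k, hk⟩ := exists_nat_ge y
    exact ⟨k, by linarith⟩
  have hm : Monotone fun k : ℕ => Ico (1 : ℝ) (k + 1) := fun i j hij =>
    Ico_subset_Ico_right (by gcongr)
  have ht := tendsto_measure_iUnion_atTop (μ := bidIntensity μ) hm
  rw [hU, bidIntensity_Ici hμ hfin] at ht
  obtain ⟨k, hk⟩ := (ht.eventually (lt_mem_nhds (ENNReal.ofReal_lt_top (r := x)))).exists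
  have hk1 : (0 : ℝ) ≤ k := k.cast_nonneg
  refine ⟨k + 1, by positivity, ?_⟩
  have h := bidCount_sub hμ hfin (a := 1) (b := k + 1) one_pos (by linarith)
  rw [bidCount_one, sub_zero] at h
  rw [h]
  exact (ENNReal.ofReal_le_iff_le_toReal (bidIntensity_Ico_ne_top hμ hfin one_pos _)).1 hk.le

lemma bidCount_bot {μ : Measure (ℤ → ℝ)} (hμ : IsBidStrategy μ)
    (hfin : ∀ T > 0, bidCost μ T ≠ ⊤) (x : ℝ) : ∃ T, 0 < T ∧ bidCount μ T < x := by
  have hU : ⋃ k : ℕ, Ico (1 / ((k : ℝ) + 1)) 1 = Ioo (0 : ℝ) 1 := by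
    ext y
    simp only [mem_iUnion, mem_Ico, mem_Ioo, exists_and_right, and_congr_left_iff]
    intro _
    constructor
    · rintro ⟨k, hk⟩
      exact lt_of_lt_of_le (by positivity) hk
    · intro hy
      obtain ⟨k, hk⟩ := exists_nat_one_div_lt hy
      exact ⟨k, hk.le⟩
  have hm : Monotone fun k : ℕ => Ico (1 / ((k : ℝ) + 1)) 1 := fun i j hij =>
    Ico_subset_Ico_left (Nat.one_div_le_one_div hij)
  have ht := tendsto_measure_iUnion_atTop (μ := bidIntensity μ) hm
  rw [hU, bidIntensity_Ioo hμ hfin] at ht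
  obtain ⟨k, hk⟩ := (ht.eventually (lt_mem_nhds (ENNReal.ofReal_lt_top (r := 1 - x)))).exists
  have hk0 : (0 : ℝ) < 1 / ((k : ℝ) + 1) := by positivity
  have hk1 : 1 / ((k : ℝ) + 1) ≤ 1 := by
    simpa using Nat.one_div_le_one_div (α := ℝ) (Nat.zero_le k)
  refine ⟨1 / (k + 1), hk0, ?_⟩
  have h := bidCount_sub hμ hfin hk0 hk1
  rw [bidCount_one] at h
  have := (ENNReal.ofReal_le_iff_le_toReal (bidIntensity_Ico_ne_top hμ hfin hk0 _)).1 hk.le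
  linarith

/-- Left continuity of the counting function at `1`, in the form needed for the offset
condition. -/
lemma bidCount_leftCont {μ : Measure (ℤ → ℝ)} (hμ : IsBidStrategy μ)
    (hfin : ∀ T > 0, bidCost μ T ≠ ⊤) {x : ℝ} (hx : x < 0) :
    ∃ T, 0 < T ∧ T < 1 ∧ x ≤ bidCount μ T := by
  have hI : ⋂ k : ℕ, Ico (1 - 1 / ((k : ℝ) + 1) / 2) 1 = ∅ := by
    ext y
    simp only [mem_iInter, mem_Ico, mem_empty_iff_false, iff_false]
    intro h
    obtain ⟨k, hk⟩ := exists_nat_one_div_lt (sub_pos.2 (h 0).2)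
    have h1 : (0 : ℝ) < 1 / ((k : ℝ) + 1) := by positivity
    linarith [(h k).1]
  have hm : Antitone fun k : ℕ => Ico (1 - 1 / ((k : ℝ) + 1) / 2) 1 := fun i j hij =>
    Ico_subset_Ico_left (by
      have := Nat.one_div_le_one_div (α := ℝ) hij
      linarith)
  have ht := tendsto_measure_iInter_atTop (μ := bidIntensity μ)
    (fun k : ℕ => (measurableSet_Ico : MeasurableSet
      (Ico (1 - 1 / ((k : ℝ) + 1) / 2) 1)).nullMeasurableSet) hm
    ⟨0, bidIntensity_Ico_ne_top hμ hfin (by norm_num) _⟩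
  rw [hI, measure_empty] at ht
  obtain ⟨k, hk⟩ := (ht.eventually (gt_mem_nhds
    (ENNReal.ofReal_pos.2 (neg_pos.2 hx)))).exists
  have hk0 : (0 : ℝ) < 1 / ((k : ℝ) + 1) := by positivity
  have hk1 : 1 / ((k : ℝ) + 1) ≤ 1 := by
    simpa using Nat.one_div_le_one_div (α := ℝ) (Nat.zero_le k)
  have hT : 0 < 1 - 1 / ((k : ℝ) + 1) / 2 := by linarith
  refine ⟨1 - 1 / ((k : ℝ) + 1) / 2, hT, by linarith, ?_⟩
  have h := bidCount_sub hμ hfin hT (b := 1) (by linarith)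
  rw [bidCount_one] at h
  have : (bidIntensity μ (Ico (1 - 1 / ((k : ℝ) + 1) / 2) 1)).toReal ≤ -x :=
    ENNReal.toReal_le_of_le_ofReal (by linarith) hk.le
  linarith

/-! ### Comparison with the cost -/

/-- Layer-cake formula for the expected cost. -/
lemma bidCost_layercake (μ : Measure (ℤ → ℝ)) [SFinite μ] (T : ℝ) :
    bidCost μ T = ∫⁻ s in Ioi (0 : ℝ),
      ∫⁻ Q, ∑' n : ℤ, (if Q (n - 1) < T ∧ s ≤ Q n then (1 : ℝ≥0∞) else 0) ∂μ := by
  have hmeas : ∀ n : ℤ, Measurable fun p : (ℤ → ℝ) × ℝ =>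
      if p.1 (n - 1) < T ∧ p.2 ≤ p.1 n then (1 : ℝ≥0∞) else 0 := fun n =>
    Measurable.ite
      ((measurableSet_lt ((measurable_pi_apply _).comp measurable_fst) measurable_const).inter
        (measurableSet_le measurable_snd ((measurable_pi_apply _).comp measurable_fst)))
      measurable_const measurable_const
  rw [← lintegral_lintegral_swap (Measurable.tsum hmeas).aemeasurable, bidCost]
  congr 1
  ext Q
  have hmeasQ : ∀ n : ℤ, Measurable fun s : ℝ =>
      if Q (n - 1) < T ∧ s ≤ Q n then (1 : ℝ≥0∞) else 0 := fun n =>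
    (hmeas n).comp measurable_prodMk_left
  rw [lintegral_tsum fun n => (hmeasQ n).aemeasurable]
  refine tsum_congr fun n => ?_
  by_cases h : Q (n - 1) < T
  · have : ∀ s : ℝ, (if s ≤ Q n then (1 : ℝ≥0∞) else 0) = (Iic (Q n)).indicator 1 s := by
      intro s
      simp [indicator_apply]
    simp only [h, if_true, true_and, this]
    rw [lintegral_indicator_one measurableSet_Iic, Measure.restrict_apply measurableSet_Iic,
      inter_comm, Ioi_inter_Iic, Real.volume_Ioc, sub_zero]
  · simp [h]

lemma lintegral_bidCount_le {μ : Measure (ℤ → ℝ)} (hμ : IsBidStrategy μ)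
    (hfin : ∀ T > 0, bidCost μ T ≠ ⊤) {T : ℝ} (hT : 0 < T) :
    ∫⁻ s in Ioi (0 : ℝ), ENNReal.ofReal (bidCount μ T + 1 - bidCount μ s) ≤ bidCost μ T := by
  have := hμ.1
  rw [bidCost_layercake]
  refine setLIntegral_mono' measurableSet_Ioi fun s hs => ?_
  have hcross : ∀ᵐ Q ∂μ, StrictMono Q ∧ ∃ m, Q (m - 1) < T ∧ T ≤ Q m := by
    filter_upwards [ae_path hμ hfin] with Q ⟨hQ, h1, h2⟩
    exact ⟨hQ, path_crossing hQ (h1 T) (h2 T hT)⟩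
  have hmI : ∀ a b : ℝ, Measurable fun Q : ℤ → ℝ =>
      ∑' n : ℤ, (if Q n ∈ Ico a b then (1 : ℝ≥0∞) else 0) := fun a b =>
    Measurable.tsum fun n => Measurable.ite (measurable_pi_apply n measurableSet_Ico)
      measurable_const measurable_const
  rcases le_or_gt s T with hsT | hsT
  · have h : bidCount μ T + 1 - bidCount μ s = (bidIntensity μ (Ico s T)).toReal + 1 := by
      linarith [bidCount_sub hμ hfin hs hsT]
    rw [h, ENNReal.ofReal_add ENNReal.toReal_nonneg zero_le_one,
      ENNReal.ofReal_toReal (bidIntensity_Ico_ne_top hμ hfin hs _), ENNReal.ofReal_one,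
      bidIntensity_apply μ measurableSet_Ico]
    have h1 : (1 : ℝ≥0∞) = ∫⁻ _, 1 ∂μ := by simp
    nth_rewrite 2 [h1]
    rw [← lintegral_add_left (hmI s T)]
    refine lintegral_mono_ae ?_
    filter_upwards [hcross] with Q hQ
    exact path_count_low hQ.1 hsT hQ.2
  · have h : bidCount μ T + 1 - bidCount μ s = 1 - (bidIntensity μ (Ico T s)).toReal := by
      linarith [bidCount_sub hμ hfin hT hsT.le]
    rw [h, ENNReal.ofReal_sub _ ENNReal.toReal_nonneg,
      ENNReal.ofReal_toReal (bidIntensity_Ico_ne_top hμ hfin hT _), ENNReal.ofReal_one,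
      tsub_le_iff_right, bidIntensity_apply μ measurableSet_Ico, ← lintegral_add_right _ (hmI T s)]
    have h1 : (1 : ℝ≥0∞) = ∫⁻ _, 1 ∂μ := by simp
    conv_lhs => rw [h1]
    refine lintegral_mono_ae ?_
    filter_upwards [hcross] with Q hQ
    exact path_count_high hQ.2

theorem strategy_to_bidding_profile
    (ρ χ : ℝ) (hχ : 1 < χ) (hχρ : χ < ρ)
    (h : ∃ μ : Measure (ℤ → ℝ), IsBidStrategy μ ∧
      (∀ T > 0, bidCost μ T ≤ ENNReal.ofReal (ρ * T)) ∧
      bidCost μ 1 ≤ ENNReal.ofReal χ) :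
    ∃ G : ℝ → ℝ, BiddingProfile ρ χ G := by
  obtain ⟨μ, hμ, hrob, hcons⟩ := h
  have hfin : ∀ T > 0, bidCost μ T ≠ ⊤ := fun T hT =>
    ((hrob T hT).trans_lt ENNReal.ofReal_lt_top).ne
  have hmono := bidCount_mono hμ hfin
  have htop := bidCount_top hμ hfin
  have hbot := bidCount_bot hμ hfin
  have hcost : ∀ T > 0, ∀ y ≤ bidCount μ T + 1,
      ∫⁻ t in Iic y, ENNReal.ofReal (posInverse (bidCount μ) t) ≤ bidCost μ T := by
    intro T hT y hy
    refine (lintegral_posInverse_le hmono htop hbot y).trans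
      (le_trans (lintegral_mono fun s => ?_) (lintegral_bidCount_le hμ hfin hT))
    exact ENNReal.ofReal_le_ofReal (by linarith)
  refine ⟨posInverse (bidCount μ), posInverse_mono htop, posInverse_leftCont hmono htop hbot,
    posInverse_pos hmono htop hbot, fun x hx => ?_, fun x hx => ?_, fun x => ?_, ?_⟩
  · obtain ⟨T, hT, hT1, hxT⟩ := bidCount_leftCont hμ hfin hx
    exact (posInverse_le hT hxT).trans_lt hT1
  · exact le_posInverse hmono htop (by rwa [bidCount_one])
  · -- The infimum defining the inverse need not be attained, so targets `T` slightly larger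
    -- are used, followed by the limit `T → posInverse (bidCount μ) x`.
    have hlim : Filter.Tendsto (fun T => ENNReal.ofReal (ρ * T))
        (nhdsWithin (posInverse (bidCount μ) x) (Ioi (posInverse (bidCount μ) x)))
        (nhds (ENNReal.ofReal (ρ * posInverse (bidCount μ) x))) :=
      ((ENNReal.continuous_ofReal.comp (continuous_const.mul continuous_id)).tendsto
        _).mono_left nhdsWithin_le_nhds
    refine ge_of_tendsto hlim ?_
    filter_upwards [self_mem_nhdsWithin] with T hT
    obtain ⟨T', hT', hlt⟩ := exists_lt_of_csInf_lt (htop x) hT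
    have hT0 : 0 < T := hT'.1.trans hlt
    have := hmono T' T hT'.1 hlt.le
    exact (hcost T hT0 _ (by linarith [hT'.2])).trans (hrob T hT0)
  · exact (hcost 1 one_pos 1 (by rw [bidCount_one]; norm_num)).trans hcons
end

section
/- Fix s ∈ (0,1] and set ρ(s) := e^s/s. Let G be a (ρ(s), χ)-bidding profile for some χ with ρ(s) ≥ χ > 1, and define A(x) := ∫_{−∞}^{x} G(t) dt. Then the function x ↦ e^{−s·x}·A(x) is non-decreasing on ℝ. -/
/-!
Write `A x = ∫_{-∞}^x G` and let `m = inf_x G x / A x ≥ 0`. Since `G` is non-decreasing,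
`A y ≥ A x + (y - x) G x ≥ (1 + m (y - x)) A x` for `x ≤ y`; iterating over `n` equal steps and
letting `n → ∞` gives the growth bound `e^{m (y - x)} A x ≤ A y` (`exp_mul_le_of_step`).
Taking `y = x + 1` in the robustness condition yields
`e^m A x ≤ A (x + 1) ≤ (e^s / s) G x` for all `x`, so by definition of the infimum
`s e^{m - s} ≤ m`. For `s ≤ 1` the function `m ↦ s e^{m - s} - m` is strictly positive on `m < s`
because `e^{m - s} > 1 + m - s`, so `m ≥ s`, and the growth bound with rate `s` is the claim.
-/

open MeasureTheory Set
open scoped ENNReal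

/-- A function satisfying the first-order growth bound at rate `m` satisfies the exponential one:
subdivide `[x, y]` into `n` equal steps and use `(1 + m (y - x) / n) ^ n → e^{m (y - x)}`. -/
lemma exp_mul_le_of_step {A : ℝ → ℝ} {m : ℝ} (hm : 0 ≤ m)
    (h : ∀ x y, x ≤ y → (1 + m * (y - x)) * A x ≤ A y) {x y : ℝ} (hxy : x ≤ y) :
    Real.exp (m * (y - x)) * A x ≤ A y := by
  have iter : ∀ d : ℝ, 0 ≤ d → ∀ n : ℕ, (1 + m * d) ^ n * A x ≤ A (x + n * d) := by
    intro d hd n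
    induction n with
    | zero => simp
    | succ n ih =>
      have h1 := h (x + n * d) (x + (n + 1 : ℕ) * d) (by push_cast; nlinarith)
      have h2 : x + (n + 1 : ℕ) * d - (x + n * d) = d := by push_cast; ring
      rw [h2] at h1
      have h3 : 0 ≤ 1 + m * d := by positivity
      calc (1 + m * d) ^ (n + 1) * A x = (1 + m * d) * ((1 + m * d) ^ n * A x) := by ring
        _ ≤ (1 + m * d) * A (x + n * d) := by gcongr
        _ ≤ _ := h1
  have lim := (Real.tendsto_one_add_div_pow_exp (m * (y - x))).mul_const (A x)
  refine le_of_tendsto lim ?_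
  filter_upwards [Filter.eventually_gt_atTop 0] with n hn
  have hn' : (0 : ℝ) < n := by exact_mod_cast hn
  have h1 := iter ((y - x) / n) (div_nonneg (by linarith) hn'.le) n
  have h2 : x + n * ((y - x) / n) = y := by field_simp; ring
  rwa [h2, ← mul_div_assoc] at h1

theorem bidding_profile_exp_tail_monotone
    (s : ℝ) (hs : s ∈ Set.Ioc (0 : ℝ) 1) (χ : ℝ)
    (hχ1 : 1 < χ) (hχρ : χ ≤ Real.exp s / s)
    (G : ℝ → ℝ) (hG : BiddingProfile (Real.exp s / s) χ G) :
    Monotone (fun x : ℝ => Real.exp (-(s * x)) * ∫ t in Set.Iic x, G t) := by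
  obtain ⟨hs0, hs1⟩ := hs
  obtain ⟨hmono, -, hpos, -, -, hrob, -⟩ := hG
  have hmeas : Measurable G := hmono.measurable
  -- The robustness condition bounds the lower integral, so the tails of `G` are integrable.
  have hint : ∀ x, IntegrableOn G (Iic x) := by
    intro x
    refine ⟨hmeas.aestronglyMeasurable, ?_⟩
    rw [hasFiniteIntegral_iff_ofReal (ae_of_all _ fun t => (hpos t).le)]
    have := hrob (x - 1)
    rw [sub_add_cancel] at this
    exact this.trans_lt ENNReal.ofReal_lt_top
  set A : ℝ → ℝ := fun x => ∫ t in Iic x, G t with hA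
  have hrobA : ∀ x, A (x + 1) ≤ Real.exp s / s * G x := by
    intro x
    have h1 := hrob x
    rw [← ofReal_integral_eq_lintegral_ofReal (hint _) (ae_of_all _ fun t => (hpos t).le)] at h1
    have h2 := hpos x
    exact (ENNReal.ofReal_le_ofReal_iff (by positivity)).1 h1
  have hApos : ∀ x, 0 < A x := by
    intro x
    refine (setIntegral_pos_iff_support_of_nonneg_ae
      (ae_of_all _ fun t => (hpos t).le) (hint x)).2 ?_
    have : Function.support G = univ := by
      ext t; simp [(hpos t).ne']
    simp [this]
  have hstep : ∀ x y, x ≤ y → A x + (y - x) * G x ≤ A y := by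
    intro x y hxy
    have h1 : A y - A x = ∫ t in x..y, G t :=
      (intervalIntegral.integral_Iic_sub_Iic (hint x) (hint y))
    have h2 : ∫ _t in x..y, G x ≤ ∫ t in x..y, G t :=
      intervalIntegral.integral_mono_on hxy (by simp) hmono.intervalIntegrable
        fun t ht => hmono ht.1
    rw [intervalIntegral.integral_const, smul_eq_mul] at h2
    linarith
  -- A linear bound `m * A ≤ G` yields exponential growth of `A` at rate `m`.
  have hgrow : ∀ m, 0 ≤ m → (∀ x, m * A x ≤ G x) → ∀ x y, x ≤ y →
      Real.exp (m * (y - x)) * A x ≤ A y := by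
    intro m hm h x y hxy
    refine exp_mul_le_of_step hm (fun x y hxy => ?_) hxy
    have h1 := hstep x y hxy
    nlinarith [mul_le_mul_of_nonneg_left (h x) (sub_nonneg.2 hxy)]
  set m : ℝ := ⨅ x, G x / A x with hm
  have hm0 : 0 ≤ m := Real.iInf_nonneg fun x => (div_pos (hpos x) (hApos x)).le
  have hmA : ∀ x, m * A x ≤ G x := by
    intro x
    rw [← le_div_iff₀ (hApos x)]
    exact ciInf_le ⟨0, by rintro _ ⟨t, rfl⟩; exact (div_pos (hpos t) (hApos t)).le⟩ x
  have hself : s * Real.exp (m - s) ≤ m := by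
    refine le_ciInf fun x => ?_
    rw [le_div_iff₀ (hApos x), Real.exp_sub]
    have h1 := (hgrow m hm0 hmA x (x + 1) (by linarith)).trans (hrobA x)
    rw [add_sub_cancel_left, mul_one, div_mul_eq_mul_div, le_div_iff₀ hs0] at h1
    have he := Real.exp_pos s
    rw [mul_div_assoc', div_mul_eq_mul_div, div_le_iff₀ he]
    linarith
  have hsm : s ≤ m := by
    by_contra! hlt
    have h1 := Real.add_one_lt_exp (sub_ne_zero.2 hlt.ne)
    nlinarith [mul_lt_mul_of_pos_left h1 hs0,
      mul_nonneg (sub_nonneg.2 hlt.le) (sub_nonneg.2 hs1)]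
  intro x y hxy
  have h1 := hgrow s hs0.le
    (fun x => (mul_le_mul_of_nonneg_right hsm (hApos x).le).trans (hmA x)) x y hxy
  calc Real.exp (-(s * x)) * A x
      = Real.exp (-(s * y)) * (Real.exp (s * (y - x)) * A x) := by
        rw [← mul_assoc, ← Real.exp_add]; ring_nf
    _ ≤ Real.exp (-(s * y)) * A y := by gcongr
end

section
/- Let ρ ≥ χ > 0 and let G± = (G₊, G₋) be a (ρ,χ)-excursion profile. For T > 0 define τ₊(T) := sup{t ∈ ℝ : G₊(t) < T} and τ₋(T) := sup{t ∈ ℝ : G₋(t) < T}. Then τ₊(T) ≤ ρ·T and τ₋(T) ≤ ρ·T − 1 (in particular both are finite); moreover T + 2·C₊(τ₊(T)) ≤ (1+2ρ)·T and T + 2·C₋(τ₋(T)) ≤ (1+2ρ)·T for every T > 0, and 1 + 2·C₊(τ₊(1)) ≤ 1 + 2χ. Consequently, the linear-search strategy driven by G± is (1+2ρ)-robust and (1+2χ)-consistent. -/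
/-!
Finiteness of the costs forces `G₊` and `G₋` to take arbitrarily small values near `−∞`
(`exists_lt_of_setLIntegral_ne_top`), so the sublevel sets `{G < T}` are non-empty. Since `G₊ ≥ 1`
on `(0, ∞)`, the integral of `G₊` up to `y` is at least `y` (`ofReal_le_setLIntegral`); combined
with robustness this gives `x ≤ ρ G₊(x)` and `x + 1 ≤ ρ G₋(x)`, hence the bounds on `τ₊` and `τ₋`.
Left-continuity yields `G(τ(T)) ≤ T` (`apply_sSup_le`), so robustness at `τ(T)` bounds the cost
there by `ρ T`. Finally the plus-offset condition says that `τ₊(1) = 0`, so the last claim is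
exactly the consistency condition.
-/

open MeasureTheory Set
open scoped ENNReal

/-- `C₊(x) = ∫_{−∞}^{x} G₊ + ∫_{−∞}^{x} G₋`. -/
noncomputable def Cplus (Gp Gm : ℝ → ℝ) (x : ℝ) : ℝ≥0∞ :=
  (∫⁻ t in Set.Iic x, ENNReal.ofReal (Gp t)) + ∫⁻ t in Set.Iic x, ENNReal.ofReal (Gm t)

/-- `C₋(x) = ∫_{−∞}^{x+1} G₊ + ∫_{−∞}^{x} G₋`. -/
noncomputable def Cminus (Gp Gm : ℝ → ℝ) (x : ℝ) : ℝ≥0∞ :=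
  (∫⁻ t in Set.Iic (x + 1), ENNReal.ofReal (Gp t)) + ∫⁻ t in Set.Iic x, ENNReal.ofReal (Gm t)

/-- A `(ρ,χ)`-excursion profile. -/
def ExcursionProfile (ρ χ : ℝ) (Gp Gm : ℝ → ℝ) : Prop :=
  Monotone Gp ∧ Monotone Gm ∧
  (∀ x : ℝ, ContinuousWithinAt Gp (Set.Iic x) x) ∧
  (∀ x : ℝ, ContinuousWithinAt Gm (Set.Iic x) x) ∧
  (∀ x : ℝ, 0 < Gp x) ∧ (∀ x : ℝ, 0 < Gm x) ∧
  (∀ x > (0 : ℝ), 1 ≤ Gp x) ∧ (∀ x < (0 : ℝ), Gp x < 1) ∧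
  (∀ x : ℝ, Cplus Gp Gm x ≤ ENNReal.ofReal (ρ * Gp x)) ∧
  (∀ x : ℝ, Cminus Gp Gm x ≤ ENNReal.ofReal (ρ * Gm x)) ∧
  Cplus Gp Gm 0 ≤ ENNReal.ofReal χ

theorem exists_lt_of_setLIntegral_ne_top {G : ℝ → ℝ} {a : ℝ}
    (h : ∫⁻ t in Set.Iic a, ENNReal.ofReal (G t) ≠ ⊤) {T : ℝ} (hT : 0 < T) :
    ∃ t, G t < T := by
  by_contra! hc
  apply h
  rw [eq_top_iff]
  calc (⊤ : ℝ≥0∞) = ∫⁻ _ in Set.Iic a, ENNReal.ofReal T := by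
        simp [ENNReal.mul_top, hT]
    _ ≤ _ := lintegral_mono fun t => ENNReal.ofReal_le_ofReal (hc t)

theorem ofReal_le_setLIntegral {G : ℝ → ℝ} (h : ∀ x > (0 : ℝ), 1 ≤ G x) (y : ℝ) :
    ENNReal.ofReal y ≤ ∫⁻ t in Set.Iic y, ENNReal.ofReal (G t) := by
  calc ENNReal.ofReal y = ∫⁻ _ in Set.Ioc 0 y, 1 := by simp
    _ ≤ ∫⁻ t in Set.Ioc 0 y, ENNReal.ofReal (G t) :=
        setLIntegral_mono' measurableSet_Ioc fun t ht => by simpa using h t ht.1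
    _ ≤ _ := lintegral_mono_set Set.Ioc_subset_Iic_self

theorem apply_sSup_le {G : ℝ → ℝ} (hm : Monotone G)
    (hc : ∀ x : ℝ, ContinuousWithinAt G (Set.Iic x) x) {T : ℝ} (hne : {t | G t < T}.Nonempty) :
    G (sSup {t | G t < T}) ≤ T := by
  set τ := sSup {t | G t < T}
  have ht : Filter.Tendsto G (nhdsWithin τ (Set.Iio τ)) (nhds (G τ)) :=
    (hc τ).mono Set.Iio_subset_Iic_self
  refine le_of_tendsto ht ?_
  filter_upwards [self_mem_nhdsWithin] with t htτ
  obtain ⟨s, hs, hts⟩ := exists_lt_of_lt_csSup hne htτ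
  exact ((hm hts.le).trans_lt hs).le

/-- Read with `g` the profile value at `τ(T)` and `c` the cost there: robustness and `g ≤ T` give
the competitive ratio `1 + 2ρ`. With `T = g = 1` and `χ` for `ρ` it gives the consistency bound. -/
theorem ofReal_add_two_mul_le {ρ T g : ℝ} {c : ℝ≥0∞} (hρ : 0 < ρ) (hT : 0 < T)
    (hc : c ≤ ENNReal.ofReal (ρ * g)) (hg : g ≤ T) :
    ENNReal.ofReal T + 2 * c ≤ ENNReal.ofReal ((1 + 2 * ρ) * T) := by
  have h : c ≤ ENNReal.ofReal (ρ * T) := hc.trans (ENNReal.ofReal_le_ofReal (by gcongr))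
  calc ENNReal.ofReal T + 2 * c ≤ ENNReal.ofReal T + 2 * ENNReal.ofReal (ρ * T) := by gcongr
    _ = ENNReal.ofReal ((1 + 2 * ρ) * T) := by
        rw [← ENNReal.ofReal_ofNat, ← ENNReal.ofReal_mul (by norm_num),
          ← ENNReal.ofReal_add hT.le (by positivity)]
        congr 1
        ring

theorem excursion_profile_robust_consistent
    (ρ χ : ℝ) (hχ : 0 < χ) (hχρ : χ ≤ ρ)
    (Gp Gm : ℝ → ℝ) (hG : ExcursionProfile ρ χ Gp Gm) :
    (∀ T > (0 : ℝ), sSup {t : ℝ | Gp t < T} ≤ ρ * T) ∧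
    (∀ T > (0 : ℝ), sSup {t : ℝ | Gm t < T} ≤ ρ * T - 1) ∧
    (∀ T > (0 : ℝ),
      ENNReal.ofReal T + 2 * Cplus Gp Gm (sSup {t : ℝ | Gp t < T}) ≤
        ENNReal.ofReal ((1 + 2 * ρ) * T)) ∧
    (∀ T > (0 : ℝ),
      ENNReal.ofReal T + 2 * Cminus Gp Gm (sSup {t : ℝ | Gm t < T}) ≤
        ENNReal.ofReal ((1 + 2 * ρ) * T)) ∧
    1 + 2 * Cplus Gp Gm (sSup {t : ℝ | Gp t < 1}) ≤ ENNReal.ofReal (1 + 2 * χ) := by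
  obtain ⟨hmp, hmm, hcp, hcm, hp, hm, h1, h2, hrp, hrm, hcons⟩ := hG
  have hρ : 0 < ρ := hχ.trans_le hχρ
  have hfin : Cplus Gp Gm 0 ≠ ⊤ := ne_top_of_le_ne_top ENNReal.ofReal_ne_top hcons
  have hnp : ∀ T > (0 : ℝ), {t : ℝ | Gp t < T}.Nonempty := fun T hT =>
    exists_lt_of_setLIntegral_ne_top (ENNReal.add_ne_top.1 hfin).1 hT
  have hnm : ∀ T > (0 : ℝ), {t : ℝ | Gm t < T}.Nonempty := fun T hT =>
    exists_lt_of_setLIntegral_ne_top (ENNReal.add_ne_top.1 hfin).2 hT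
  have hlp : ∀ x, x ≤ ρ * Gp x := fun x =>
    (ENNReal.ofReal_le_ofReal_iff (mul_pos hρ (hp x)).le).1
      (((ofReal_le_setLIntegral h1 x).trans le_self_add).trans (hrp x))
  have hlm : ∀ x, x + 1 ≤ ρ * Gm x := fun x =>
    (ENNReal.ofReal_le_ofReal_iff (mul_pos hρ (hm x)).le).1
      (((ofReal_le_setLIntegral h1 (x + 1)).trans le_self_add).trans (hrm x))
  refine ⟨fun T hT => csSup_le (hnp T hT) fun t ht => ?_,
    fun T hT => csSup_le (hnm T hT) fun t ht => ?_, fun T hT => ?_, fun T hT => ?_, ?_⟩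
  · exact (hlp t).trans (mul_le_mul_of_nonneg_left (le_of_lt ht) hρ.le)
  · have := mul_le_mul_of_nonneg_left (le_of_lt ht) hρ.le
    linarith [hlm t]
  · exact ofReal_add_two_mul_le hρ hT (hrp _) (apply_sSup_le hmp hcp (hnp T hT))
  · exact ofReal_add_two_mul_le hρ hT (hrm _) (apply_sSup_le hmm hcm (hnm T hT))
  · have hτ : sSup {t : ℝ | Gp t < 1} = 0 := by
      refine csSup_eq_of_forall_le_of_forall_lt_exists_gt (hnp 1 one_pos) ?_ ?_
      · intro t ht
        by_contra! h
        exact absurd ht (not_lt.2 (h1 t h))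
      · intro w hw
        exact ⟨w / 2, h2 _ (by linarith), by linarith⟩
    rw [hτ]
    have h := ofReal_add_two_mul_le (g := 1) hχ one_pos (by simpa using hcons) le_rfl
    simpa using h
end

section
/- The function s ↦ e^s·(e^{2s} − 1 + 2s·e^s)/(1+e^s)² is strictly increasing on (0,∞); hence there is a unique positive real s_K with e^{s_K}·(e^{2s_K} − 1 + 2s_K·e^{s_K}) = (1+e^{s_K})². Moreover, for every s with s_K < s ≤ s⁎, the equation (e^s − ξ)·ln ξ + ξ·(3 + e^{−s}) = e^s·(e^s + 2s − 1) has a unique solution ξ ∈ [1, e^{2s}]. -/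
/-!
Write `x = exp s`.

The function of the first claim equals `x * ((x - 1) / (x + 1)) + 2 * s * (x / (1 + x)) ^ 2`; for
`s > 0` every factor is positive and increasing, so the function is strictly increasing. It is
below `1` near `s = 0` and above `1` at `s = 1`, hence takes the value `1` exactly once.

For the equation in `ξ`, the left-hand side `F ξ` has derivative `-log ξ + x / ξ + 2 + 1 / x`, which
on `(1, x ^ 2)` exceeds `2 * (1 - s + 1 / x)`. This bound is nonnegative exactly when
`(s - 1) * x ≤ 1`, that is, when `s` is at most `s⁎`, so `F` is strictly increasing there. The
inequality `F 1 ≤ RHS` is equivalent to `s` being at least `s_K`, and `RHS ≤ F (x ^ 2)` is again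
`(s - 1) * x ≤ 1`. The intermediate value theorem concludes.
-/

theorem strictMonoOn_ratio :
    StrictMonoOn
      (fun s : ℝ =>
        Real.exp s * (Real.exp (2 * s) - 1 + 2 * s * Real.exp s) / (1 + Real.exp s) ^ 2)
      (Set.Ioi 0) := by
  have key : ∀ s : ℝ,
      Real.exp s * (Real.exp (2 * s) - 1 + 2 * s * Real.exp s) / (1 + Real.exp s) ^ 2 =
        Real.exp s * ((Real.exp s - 1) / (1 + Real.exp s)) +
          2 * s * (Real.exp s / (1 + Real.exp s)) ^ 2 := by
    intro s
    have hx := Real.exp_pos s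
    rw [show (2 : ℝ) * s = s + s by ring, Real.exp_add]
    field_simp
    ring
  intro a ha b hb hab
  simp only [Set.mem_Ioi] at ha hb
  simp only [key]
  have hxa : 1 < Real.exp a := Real.one_lt_exp_iff.2 ha
  have hxy : Real.exp a < Real.exp b := Real.exp_lt_exp.2 hab
  generalize Real.exp a = x at *
  generalize Real.exp b = y at *
  have h1 : (x - 1) / (1 + x) < (y - 1) / (1 + y) := by
    rw [div_lt_div_iff₀ (by linarith) (by linarith)]; nlinarith
  have h2 : x / (1 + x) < y / (1 + y) := by
    rw [div_lt_div_iff₀ (by linarith) (by linarith)]; nlinarith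
  have h3 : 0 < (x - 1) / (1 + x) := div_pos (by linarith) (by linarith)
  have h4 : 0 < x / (1 + x) := div_pos (by linarith) (by linarith)
  apply add_lt_add
  · exact mul_lt_mul'' hxy h1 (by linarith) h3.le
  · exact mul_lt_mul'' (by linarith) (pow_lt_pow_left₀ h2 h4.le two_ne_zero) (by linarith)
      (by positivity)

theorem existsUnique_sK :
    ∃! sK : ℝ, 0 < sK ∧
      Real.exp sK * (Real.exp (2 * sK) - 1 + 2 * sK * Real.exp sK) = (1 + Real.exp sK) ^ 2 := by
  have hcont : ContinuousOn (fun s : ℝ =>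
      Real.exp s * (Real.exp (2 * s) - 1 + 2 * s * Real.exp s) - (1 + Real.exp s) ^ 2)
      (Set.Icc 0 1) := by fun_prop
  have h1 : 0 < Real.exp 1 * (Real.exp (2 * 1) - 1 + 2 * 1 * Real.exp 1) -
      (1 + Real.exp 1) ^ 2 := by
    have he : 2.7 < Real.exp 1 := by linarith [Real.exp_one_gt_d9]
    rw [show (2 : ℝ) * 1 = 1 + 1 by ring, Real.exp_add]
    nlinarith [mul_pos (sub_pos.2 he) (sub_pos.2 he), pow_pos (sub_pos.2 he) 3]
  obtain ⟨s, hs, hs0⟩ := intermediate_value_Icc (zero_le_one' ℝ) hcont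
    (show (0 : ℝ) ∈ Set.Icc _ _ from ⟨by norm_num, h1.le⟩)
  have hpos : 0 < s := by
    rcases hs.1.eq_or_lt with h | h
    · subst h
      norm_num at hs0
    · exact h
  refine ⟨s, ⟨hpos, sub_eq_zero.1 hs0⟩, ?_⟩
  rintro t ⟨ht, ht0⟩
  refine strictMonoOn_ratio.injOn ht hpos ?_
  rw [ht0, sub_eq_zero.1 hs0, div_self (by positivity), div_self (by positivity)]

/-- The condition `s ≤ s⁎` enters the `ξ`-equation only through `(s - 1) * exp s ≤ 1`. -/
theorem sub_one_mul_exp_le_one {t s : ℝ} (ht : 1 < t) (h : (t - 1) * Real.exp t = 1)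
    (hst : s ≤ t) : (s - 1) * Real.exp s ≤ 1 := by
  rcases le_total s 1 with h1 | h1
  · nlinarith [Real.exp_pos s]
  · rw [← h]
    exact mul_le_mul (by linarith) (Real.exp_le_exp.2 hst) (Real.exp_pos s).le (by linarith)

theorem strictMonoOn_xi {s : ℝ} (hs : (s - 1) * Real.exp s ≤ 1) :
    StrictMonoOn (fun ξ : ℝ => (Real.exp s - ξ) * Real.log ξ + ξ * (3 + Real.exp (-s)))
      (Set.Icc 1 (Real.exp (2 * s))) := by
  have hd : ∀ ξ : ℝ, 0 < ξ →
      HasDerivAt (fun ξ : ℝ => (Real.exp s - ξ) * Real.log ξ + ξ * (3 + Real.exp (-s)))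
        ((-1) * Real.log ξ + (Real.exp s - ξ) * ξ⁻¹ + 1 * (3 + Real.exp (-s))) ξ := by
    intro ξ hξ
    exact (((hasDerivAt_id ξ).const_sub (Real.exp s)).mul (Real.hasDerivAt_log hξ.ne')).add
      ((hasDerivAt_id ξ).mul_const _)
  refine strictMonoOn_of_deriv_pos (convex_Icc _ _)
    (fun ξ hξ => (hd ξ (by linarith [hξ.1])).continuousAt.continuousWithinAt) ?_
  intro ξ hξ
  rw [interior_Icc] at hξ
  have h0 : 0 < ξ := by linarith [hξ.1]
  rw [(hd ξ h0).deriv]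
  have hx := Real.exp_pos s
  have hlog : Real.log ξ < 2 * s := (Real.log_lt_iff_lt_exp h0).2 hξ.2
  have hinv : Real.exp (-s) < Real.exp s * ξ⁻¹ := by
    rw [← div_eq_mul_inv, lt_div_iff₀ h0]
    calc Real.exp (-s) * ξ < Real.exp (-s) * Real.exp (2 * s) :=
          mul_lt_mul_of_pos_left hξ.2 (Real.exp_pos _)
      _ = Real.exp s := by rw [← Real.exp_add]; ring_nf
  have hbound : s - 1 ≤ Real.exp (-s) := by
    rw [Real.exp_neg, ← one_div, le_div_iff₀ hx]
    exact hs
  have hsplit : (Real.exp s - ξ) * ξ⁻¹ = Real.exp s * ξ⁻¹ - 1 := by field_simp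
  rw [hsplit]
  linarith

theorem sK_and_xi_exist_unique :
    StrictMonoOn
      (fun s : ℝ =>
        Real.exp s * (Real.exp (2 * s) - 1 + 2 * s * Real.exp s) / (1 + Real.exp s) ^ 2)
      (Set.Ioi 0) ∧
    (∃! sK : ℝ, 0 < sK ∧
      Real.exp sK * (Real.exp (2 * sK) - 1 + 2 * sK * Real.exp sK) = (1 + Real.exp sK) ^ 2) ∧
    (∀ sstar : ℝ, 1 < sstar → (sstar - 1) * Real.exp sstar = 1 →
      ∀ sK : ℝ,
        (0 < sK ∧
          Real.exp sK * (Real.exp (2 * sK) - 1 + 2 * sK * Real.exp sK) =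
            (1 + Real.exp sK) ^ 2) →
        ∀ s : ℝ, sK < s → s ≤ sstar →
          ∃! ξ : ℝ, ξ ∈ Set.Icc 1 (Real.exp (2 * s)) ∧
            (Real.exp s - ξ) * Real.log ξ + ξ * (3 + Real.exp (-s)) =
              Real.exp s * (Real.exp s + 2 * s - 1)) := by
  refine ⟨strictMonoOn_ratio, existsUnique_sK, ?_⟩
  rintro t ht ht1 sK ⟨hK, hKeq⟩ s hKs hst
  have hs : (s - 1) * Real.exp s ≤ 1 := sub_one_mul_exp_le_one ht ht1 hst
  have hspos : 0 < s := hK.trans hKs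
  have hx := Real.exp_pos s
  have hmono := strictMonoOn_xi hs
  have hsq : Real.exp (2 * s) = Real.exp s * Real.exp s := by rw [← Real.exp_add]; ring_nf
  have hinv : Real.exp s * Real.exp (-s) = 1 := by rw [← Real.exp_add]; simp
  have hratio : (1 + Real.exp s) ^ 2 <
      Real.exp s * (Real.exp (2 * s) - 1 + 2 * s * Real.exp s) := by
    have h := strictMonoOn_ratio hK hspos hKs
    simp only at h
    rw [hKeq, div_self (by positivity), one_lt_div (by positivity)] at h
    exact h
  have hcont : ContinuousOn
      (fun ξ : ℝ => (Real.exp s - ξ) * Real.log ξ + ξ * (3 + Real.exp (-s)))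
      (Set.Icc 1 (Real.exp (2 * s))) := by
    have hlog : ContinuousOn Real.log (Set.Icc 1 (Real.exp (2 * s))) :=
      Real.continuousOn_log.mono fun ξ hξ => (zero_lt_one.trans_le hξ.1).ne'
    fun_prop
  have hleft : (Real.exp s - 1) * Real.log 1 + 1 * (3 + Real.exp (-s)) ≤
      Real.exp s * (Real.exp s + 2 * s - 1) := by
    rw [Real.log_one]
    refine le_of_mul_le_mul_left ?_ hx
    rw [hsq] at hratio
    linear_combination hratio + hinv
  have hright : Real.exp s * (Real.exp s + 2 * s - 1) ≤
      (Real.exp s - Real.exp (2 * s)) * Real.log (Real.exp (2 * s)) +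
        Real.exp (2 * s) * (3 + Real.exp (-s)) := by
    rw [Real.log_exp, hsq]
    have := mul_le_mul_of_nonneg_left hs hx.le
    linear_combination 2 * this - Real.exp s * hinv
  obtain ⟨ξ, hξ, hξeq⟩ := intermediate_value_Icc (Real.one_le_exp (by linarith)) hcont
    ⟨hleft, hright⟩
  refine ⟨ξ, ⟨hξ, hξeq⟩, ?_⟩
  rintro η ⟨hη, hηeq⟩
  exact hmono.injOn hη hξ (hηeq.trans hξeq.symm)
end

section
/- Let s⁎ be the unique real s > 1 with (s−1)·e^s = 1, and let s_K be the unique positive solution of e^s·(e^{2s} − 1 + 2s·e^s) = (1+e^s)². For s ∈ (0, s⁎], define K(s) := e^s·(e^{2s} − 1 + 2s·e^s)/(1+e^s)² if s ≤ s_K, and K(s) := ξ(s) if s_K < s ≤ s⁎, where ξ(s) is the unique solution ξ ∈ [1, e^{2s}] of (e^s − ξ)·ln ξ + ξ·(3 + e^{−s}) = e^s·(e^s + 2s − 1). Then for every s ∈ (0, s⁎] there exists a (ρ(s), χ(s))-excursion profile, where ρ(s) := (1+e^s)/(2s), and χ(s) := (e^{2s} − 1 − 2s)/(2s·(1+e^s))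 for s ∈ (0, s_K] (equivalently χ(s) = ρ(s)·K(s)·e^{−s} − 1 on this range), and χ(s) := (e^{2s} + 1 + (1+K(s))·ln K(s) − 2K(s) − 2s)/(2s·(1+e^s)) for s ∈ (s_K, s⁎]. -/
/-!
Write `l = 2s`, `E = e^s`, `ρ = (1 + E) / l`. The exponentials `(e^{l x}, E e^{l x})` solve the tight
equations `C₊ = ρ G₊`, `C₋ = ρ G₋`. The profile is explicit on the positive half-line,
`G₊(x) = max 1 (c e^{l x})`, `G₋(x) = c E e^{l x}` with `c = max 1 K / E²`, and robustness there is
a computation starting from `C₋(0) ≤ ρ c E` (`exists_profile_of_params`).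

On `(-∞, 0]` the profile is the minimal nonnegative solution of the tight equations with these data
on `(0, ∞)`, obtained by monotone iteration from zero (`tightIter`, `exists_minimal_tight`). It has
no closed form, but its cost at the origin can be controlled by duality: integrating the equations
against `e^{-l x} (E, 1)` gives, for one step of the iteration, an identity (`wmass_identity`)

`E C₊(0) + C₋(0) + (1 + E) Φ_{n+1} = E² ∫₀¹ e^{-l t} G₊(t) dt + (1 + E) Φ_n`,

where `Φ_n` is a weighted mass of the `n`-th iterate. Since `Φ_n` is finite and nondecreasing,
`E C₊(0) + C₋(0) ≤ E² ∫₀¹ e^{-l t} G₊(t) dt`; together with `C₋(0) = C₊(0) + ∫₀¹ G₊` this is exactly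
`C₊(0) ≤ χ`. The condition `C₋(0) ≤ ρ c E` then becomes `K ≤ 1` when `s ≤ s_K` (where `K` is
increasing in `s`, see `K_le_one`), and the equation defining `K` when `s > s_K`.
-/

open MeasureTheory Set
open scoped ENNReal

/-- A tight `(ρ,χ)`-excursion profile. -/
def TightExcursion (ρ χ : ℝ) (Gp Gm : ℝ → ℝ) : Prop :=
  (∀ x : ℝ, Cplus Gp Gm x = ENNReal.ofReal (ρ * Gp x)) ∧
  (∀ x : ℝ, Cminus Gp Gm x = ENNReal.ofReal (ρ * Gm x)) ∧
  Cplus Gp Gm 0 = ENNReal.ofReal χ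

/-! ### Exponential weights -/

lemma lintegral_exp_Ioc {c l a b : ℝ} (hc : 0 ≤ c) (hl : l ≠ 0) (hab : a ≤ b) :
    ∫⁻ t in Ioc a b, ENNReal.ofReal (c * Real.exp (l * t)) =
      ENNReal.ofReal (c * (Real.exp (l * b) - Real.exp (l * a)) / l) := by
  have hcont : Continuous fun t : ℝ => c * Real.exp (l * t) := by fun_prop
  rw [← ofReal_integral_eq_lintegral_ofReal
    (hcont.integrableOn_Ioc) (ae_of_all _ fun t => by positivity),
    ← intervalIntegral.integral_of_le hab]
  congr 1
  have hd : ∀ t ∈ uIcc a b,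
      HasDerivAt (fun t => c * Real.exp (l * t) / l) (c * Real.exp (l * t)) t := by
    intro t _
    have h1 : HasDerivAt (fun t : ℝ => l * t) l t := by
      simpa using (hasDerivAt_id t).const_mul l
    have := ((h1.exp).const_mul c).div_const l
    refine this.congr_deriv ?_
    rw [← mul_assoc, mul_div_cancel_right₀ _ hl]
  rw [intervalIntegral.integral_eq_sub_of_hasDerivAt hd (hcont.intervalIntegrable _ _)]
  ring

lemma lintegral_exp_Ioc_add_one {l t : ℝ} (hl : 0 < l) (ht : t ≤ 0) :
    1 + ∫⁻ x in Ioc t 0, ENNReal.ofReal (l * Real.exp (-l * x)) =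
      ENNReal.ofReal (Real.exp (-l * t)) := by
  have h1 : 1 ≤ Real.exp (-l * t) := Real.one_le_exp (by nlinarith)
  have h2 : l * (Real.exp (-l * 0) - Real.exp (-l * t)) / -l = Real.exp (-l * t) - 1 := by
    rw [mul_zero, Real.exp_zero]
    field_simp
    ring
  rw [lintegral_exp_Ioc hl.le (by linarith) ht, h2, ← ENNReal.ofReal_one,
    ← ENNReal.ofReal_add zero_le_one (by linarith)]
  congr 1
  ring

/-- Integration by parts against the weight `e^{-l t}` on `(-∞, 0]`, valid in `ℝ≥0∞` with no
integrability assumption because it is an instance of Tonelli's theorem. -/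
lemma tonelli_exp {l : ℝ} (hl : 0 < l) {F : ℝ → ℝ≥0∞} (hF : Measurable F) :
    (∫⁻ t in Iic (0 : ℝ), F t) +
      ∫⁻ x in Iic (0 : ℝ), ENNReal.ofReal (l * Real.exp (-l * x)) * ∫⁻ t in Iic x, F t =
    ∫⁻ t in Iic (0 : ℝ), ENNReal.ofReal (Real.exp (-l * t)) * F t := by
  have hw : Measurable fun x : ℝ => ENNReal.ofReal (l * Real.exp (-l * x)) := by fun_prop
  have key : ∫⁻ x in Iic (0 : ℝ),
      ENNReal.ofReal (l * Real.exp (-l * x)) * ∫⁻ t in Iic x, F t =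
      ∫⁻ t in Iic (0 : ℝ),
        (∫⁻ x in Ioc t 0, ENNReal.ofReal (l * Real.exp (-l * x))) * F t := by
    have h1 : ∀ x ∈ Iic (0 : ℝ),
        ENNReal.ofReal (l * Real.exp (-l * x)) * ∫⁻ t in Iic x, F t =
        ∫⁻ t in Iic (0 : ℝ), {p : ℝ × ℝ | p.2 ≤ p.1}.indicator
          (fun p => ENNReal.ofReal (l * Real.exp (-l * p.1)) * F p.2) (x, t) := by
      intro x hx
      rw [← lintegral_const_mul _ hF, ← lintegral_indicator measurableSet_Iic,
        ← lintegral_indicator measurableSet_Iic]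
      congr 1; ext t
      simp only [indicator, mem_Iic, mem_ofPred_eq] at hx ⊢
      by_cases htx : t ≤ x
      · simp [htx, htx.trans hx]
      · simp [htx]
    have hS : MeasurableSet {p : ℝ × ℝ | p.2 ≤ p.1} :=
      measurableSet_le measurable_snd measurable_fst
    rw [setLIntegral_congr_fun measurableSet_Iic h1, lintegral_lintegral_swap]
    · refine setLIntegral_congr_fun measurableSet_Iic fun t ht => ?_
      rw [← lintegral_mul_const _ hw, restrict_Ioc_eq_restrict_Icc,
        ← lintegral_indicator measurableSet_Iic, ← lintegral_indicator measurableSet_Icc]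
      congr 1; ext x
      simp only [indicator, mem_Iic, mem_Icc, mem_ofPred_eq] at ht ⊢
      by_cases htx : t ≤ x <;> by_cases hx : x ≤ 0 <;> simp [htx, hx]
    · exact (((hw.comp measurable_fst).mul (hF.comp measurable_snd)).indicator hS).aemeasurable
  rw [key, ← lintegral_add_left hF]
  refine setLIntegral_congr_fun measurableSet_Iic fun t ht => ?_
  rw [← lintegral_exp_Ioc_add_one hl ht, add_mul, one_mul]

/-! ### The tight recursion on the negative half-line -/

/-- The cost `C₊` of a pair of `ℝ≥0∞`-valued functions. -/
noncomputable def costP (P M : ℝ → ℝ≥0∞) (x : ℝ) : ℝ≥0∞ :=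
  (∫⁻ t in Iic x, P t) + ∫⁻ t in Iic x, M t

/-- The cost `C₋` of a pair of `ℝ≥0∞`-valued functions. -/
noncomputable def costM (P M : ℝ → ℝ≥0∞) (x : ℝ) : ℝ≥0∞ :=
  (∫⁻ t in Iic (x + 1), P t) + ∫⁻ t in Iic x, M t

lemma monotone_lintegral_Iic (F : ℝ → ℝ≥0∞) : Monotone fun x : ℝ => ∫⁻ t in Iic x, F t :=
  fun _ _ h => lintegral_mono_set (Iic_subset_Iic.2 h)

lemma monotone_costP (P M : ℝ → ℝ≥0∞) : Monotone (costP P M) := fun _ _ h =>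
  add_le_add (monotone_lintegral_Iic P h) (monotone_lintegral_Iic M h)

lemma monotone_costM (P M : ℝ → ℝ≥0∞) : Monotone (costM P M) := fun _ _ h =>
  add_le_add (monotone_lintegral_Iic P (by linarith)) (monotone_lintegral_Iic M h)

lemma costP_mono {P M P' M' : ℝ → ℝ≥0∞} (hP : P ≤ P') (hM : M ≤ M') (x : ℝ) :
    costP P M x ≤ costP P' M' x :=
  add_le_add (lintegral_mono hP) (lintegral_mono hM)

lemma costM_mono {P M P' M' : ℝ → ℝ≥0∞} (hP : P ≤ P') (hM : M ≤ M') (x : ℝ) :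
    costM P M x ≤ costM P' M' x :=
  add_le_add (lintegral_mono hP) (lintegral_mono hM)

lemma lintegral_Iic_add_one (F : ℝ → ℝ≥0∞) (x : ℝ) :
    ∫⁻ t in Iic (x + 1), F t = ∫⁻ t in Iic x, F (t + 1) := by
  rw [← lintegral_indicator measurableSet_Iic, ← lintegral_indicator measurableSet_Iic,
    ← lintegral_add_right_eq_self _ (1 : ℝ)]
  congr 1; ext t
  simp [indicator]

/-- The exponentially weighted mass `∫_{-∞}^0 e^{-l t} (E P(t) + M(t)) dt` of a pair. The vector
`(E, 1)` is the left eigenvector dual to the exponential solution `(e^{l t}, E e^{l t})` of the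
tight equations. -/
noncomputable def wmass (l E : ℝ) (P M : ℝ → ℝ≥0∞) : ℝ≥0∞ :=
  ENNReal.ofReal E * (∫⁻ t in Iic (0 : ℝ), ENNReal.ofReal (Real.exp (-l * t)) * P t) +
    ∫⁻ t in Iic (0 : ℝ), ENNReal.ofReal (Real.exp (-l * t)) * M t

/-- The weighted form of a tight equation `ρ P' = ∫ P + ∫ M` on `(-∞, 0]`. It serves both tight
equations, the second one after `P` is replaced by its translate `P (· + 1)`. -/
lemma costP_add_weighted {l ρ κ : ℝ} (hl : 0 < l) (hρ : l * ρ = κ)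
    {P M P' : ℝ → ℝ≥0∞} (hP : Measurable P) (hM : Measurable M) (hP' : Measurable P')
    (h : ∀ x ≤ 0, ENNReal.ofReal ρ * P' x = (∫⁻ t in Iic x, P t) + ∫⁻ t in Iic x, M t) :
    ((∫⁻ t in Iic (0 : ℝ), P t) + ∫⁻ t in Iic (0 : ℝ), M t) +
      ENNReal.ofReal κ * (∫⁻ t in Iic (0 : ℝ), ENNReal.ofReal (Real.exp (-l * t)) * P' t) =
    (∫⁻ t in Iic (0 : ℝ), ENNReal.ofReal (Real.exp (-l * t)) * P t) +
      ∫⁻ t in Iic (0 : ℝ), ENNReal.ofReal (Real.exp (-l * t)) * M t := by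
  have hw : Measurable fun x : ℝ => ENNReal.ofReal (l * Real.exp (-l * x)) := by fun_prop
  have hw' : Measurable fun x : ℝ =>
      ENNReal.ofReal (l * Real.exp (-l * x)) * ∫⁻ t in Iic x, P t :=
    hw.mul (monotone_lintegral_Iic P).measurable
  have hwP' : Measurable fun x : ℝ => ENNReal.ofReal (Real.exp (-l * x)) * P' x :=
    (by fun_prop : Measurable fun x : ℝ => ENNReal.ofReal (Real.exp (-l * x))).mul hP'
  rw [← tonelli_exp hl hP, ← tonelli_exp hl hM, add_add_add_comm, ← lintegral_add_left hw',
    ← lintegral_const_mul _ hwP']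
  congr 1
  refine setLIntegral_congr_fun measurableSet_Iic fun x hx => ?_
  rw [← mul_add, ← h x hx, ← hρ, ENNReal.ofReal_mul hl.le, ENNReal.ofReal_mul hl.le]
  ring

/-- The duality identity for one step `(P, M) ↦ (P', M')` of the tight recursion: the combination
`E C₊(0) + C₋(0)` of the boundary costs and the increase of the weighted mass together balance the
contribution of `P` on `(0, 1]`. The choice `E ^ 2 = e^l`, `l ρ = 1 + E` is what makes the same
functional `wmass` appear on both sides. -/
lemma wmass_identity {l ρ E : ℝ} (hl : 0 < l) (hE : 0 < E) (hEl : E ^ 2 = Real.exp l)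
    (hρ : l * ρ = 1 + E)
    {P M P' M' : ℝ → ℝ≥0∞} (hP : Measurable P) (hM : Measurable M)
    (hP' : Measurable P') (hM' : Measurable M')
    (h1 : ∀ x ≤ 0, ENNReal.ofReal ρ * P' x = costP P M x)
    (h2 : ∀ x ≤ 0, ENNReal.ofReal ρ * M' x = costM P M x) :
    ENNReal.ofReal E * costP P M 0 + costM P M 0 +
      ENNReal.ofReal (1 + E) * wmass l E P' M' =
    ENNReal.ofReal (E ^ 2) *
        (∫⁻ t in Ioc (0 : ℝ) 1, ENNReal.ofReal (Real.exp (-l * t)) * P t) +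
      ENNReal.ofReal (1 + E) * wmass l E P M := by
  have a1 := costP_add_weighted hl hρ hP hM hP' h1
  have a2 := costP_add_weighted (P := fun t => P (t + 1)) hl hρ
    (hP.comp (measurable_id.add_const 1)) hM hM'
    (fun x hx => by rw [h2 x hx, costM, lintegral_Iic_add_one])
  have hP1 : Measurable fun t : ℝ => ENNReal.ofReal (Real.exp (-l * t)) * P t :=
    (by fun_prop : Measurable fun x : ℝ => ENNReal.ofReal (Real.exp (-l * x))).mul hP
  have a3 : ∫⁻ t in Iic (0 : ℝ), ENNReal.ofReal (Real.exp (-l * t)) * P (t + 1) =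
      ENNReal.ofReal (E ^ 2) *
        ((∫⁻ t in Iic (0 : ℝ), ENNReal.ofReal (Real.exp (-l * t)) * P t) +
        ∫⁻ t in Ioc (0 : ℝ) 1, ENNReal.ofReal (Real.exp (-l * t)) * P t) := by
    rw [← lintegral_union measurableSet_Ioc (Iic_disjoint_Ioc le_rfl),
      Iic_union_Ioc_eq_Iic zero_le_one]
    have := lintegral_Iic_add_one (fun t => ENNReal.ofReal (Real.exp (-l * t)) * P t) 0
    rw [zero_add] at this
    have hP2 : Measurable fun t : ℝ => ENNReal.ofReal (Real.exp (-l * (t + 1))) * P (t + 1) :=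
      hP1.comp (measurable_id.add_const 1)
    rw [this, ← lintegral_const_mul _ hP2]
    refine lintegral_congr fun t => ?_
    rw [← mul_assoc, ← ENNReal.ofReal_mul (by positivity), hEl, ← Real.exp_add]
    congr 3
    ring
  rw [a3, ← lintegral_Iic_add_one] at a2
  have e1 : ENNReal.ofReal (1 + E) = 1 + ENNReal.ofReal E := by
    rw [ENNReal.ofReal_add zero_le_one hE.le, ENNReal.ofReal_one]
  have e2 : ENNReal.ofReal (E ^ 2) = ENNReal.ofReal E ^ 2 := ENNReal.ofReal_pow hE.le 2
  rw [e1] at a1 a2 ⊢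
  rw [e2] at a2 ⊢
  unfold wmass costP costM
  trans ENNReal.ofReal E * (((∫⁻ t in Iic (0 : ℝ), P t) + ∫⁻ t in Iic (0 : ℝ), M t) +
      (1 + ENNReal.ofReal E) *
        (∫⁻ t in Iic (0 : ℝ), ENNReal.ofReal (Real.exp (-l * t)) * P' t)) +
    (((∫⁻ t in Iic (0 + 1 : ℝ), P t) + ∫⁻ t in Iic (0 : ℝ), M t) +
      (1 + ENNReal.ofReal E) *
        ∫⁻ t in Iic (0 : ℝ), ENNReal.ofReal (Real.exp (-l * t)) * M' t)
  · ring
  · rw [a1, a2]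
    ring

/-- The iterates of `(P, M) ↦ (C₊ / ρ, C₋ / ρ)` on `(-∞, 0]`, with the values `H`, `Q` prescribed
on `(0, ∞)`, started from zero on `(-∞, 0]`. -/
noncomputable def tightIter (ρ : ℝ) (H Q : ℝ → ℝ≥0∞) : ℕ → (ℝ → ℝ≥0∞) × (ℝ → ℝ≥0∞)
  | 0 => (fun x => if 0 < x then H x else 0, fun x => if 0 < x then Q x else 0)
  | n + 1 =>
    (fun x => if 0 < x then H x else
        costP (tightIter ρ H Q n).1 (tightIter ρ H Q n).2 x / ENNReal.ofReal ρ,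
      fun x => if 0 < x then Q x else
        costM (tightIter ρ H Q n).1 (tightIter ρ H Q n).2 x / ENNReal.ofReal ρ)

lemma tightIter_pos (ρ : ℝ) (H Q : ℝ → ℝ≥0∞) (n : ℕ) {x : ℝ} (hx : 0 < x) :
    (tightIter ρ H Q n).1 x = H x ∧ (tightIter ρ H Q n).2 x = Q x := by
  cases n <;> simp [tightIter, hx]

lemma measurable_tightIter (ρ : ℝ) {H Q : ℝ → ℝ≥0∞} (hH : Measurable H) (hQ : Measurable Q)
    (n : ℕ) : Measurable (tightIter ρ H Q n).1 ∧ Measurable (tightIter ρ H Q n).2 := by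
  cases n with
  | zero => exact ⟨hH.ite measurableSet_Ioi measurable_const,
      hQ.ite measurableSet_Ioi measurable_const⟩
  | succ n => exact
      ⟨hH.ite measurableSet_Ioi ((monotone_costP _ _).measurable.div_const _),
        hQ.ite measurableSet_Ioi ((monotone_costM _ _).measurable.div_const _)⟩

lemma tightIter_le_succ (ρ : ℝ) (H Q : ℝ → ℝ≥0∞) (n : ℕ) :
    tightIter ρ H Q n ≤ tightIter ρ H Q (n + 1) := by
  induction n with
  | zero =>
    constructor <;> intro x <;> by_cases hx : 0 < x <;> simp [tightIter, hx]
  | succ n ih =>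
    constructor <;> intro x <;> by_cases hx : 0 < x
    · simp [tightIter, hx]
    · simp only [tightIter, hx, if_false]
      exact ENNReal.div_le_div_right (costP_mono ih.1 ih.2 x) _
    · simp [tightIter, hx]
    · simp only [tightIter, hx, if_false]
      exact ENNReal.div_le_div_right (costM_mono ih.1 ih.2 x) _

lemma tightIter_succ_eq {ρ : ℝ} (hρ : 0 < ρ) (H Q : ℝ → ℝ≥0∞) (n : ℕ) {x : ℝ} (hx : x ≤ 0) :
    ENNReal.ofReal ρ * (tightIter ρ H Q (n + 1)).1 x =
        costP (tightIter ρ H Q n).1 (tightIter ρ H Q n).2 x ∧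
      ENNReal.ofReal ρ * (tightIter ρ H Q (n + 1)).2 x =
        costM (tightIter ρ H Q n).1 (tightIter ρ H Q n).2 x := by
  have h0 : ENNReal.ofReal ρ ≠ 0 := by simpa using hρ
  simp only [tightIter, hx.not_gt, if_false]
  exact ⟨ENNReal.mul_div_cancel h0 ENNReal.ofReal_ne_top,
    ENNReal.mul_div_cancel h0 ENNReal.ofReal_ne_top⟩

lemma wmass_mono (l E : ℝ) {P M P' M' : ℝ → ℝ≥0∞} (hP : P ≤ P') (hM : M ≤ M') :
    wmass l E P M ≤ wmass l E P' M' := by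
  unfold wmass
  gcongr <;> apply_assumption

lemma costP_iSup {P M : ℕ → ℝ → ℝ≥0∞} (hP : ∀ n, Measurable (P n)) (hM : ∀ n, Measurable (M n))
    (hP' : Monotone P) (hM' : Monotone M) (x : ℝ) :
    costP (fun t => ⨆ n, P n t) (fun t => ⨆ n, M n t) x = ⨆ n, costP (P n) (M n) x := by
  unfold costP
  rw [lintegral_iSup hP hP', lintegral_iSup hM hM', ENNReal.iSup_add_iSup_of_monotone]
  · exact fun _ _ h => lintegral_mono (hP' h)
  · exact fun _ _ h => lintegral_mono (hM' h)

lemma costM_iSup {P M : ℕ → ℝ → ℝ≥0∞} (hP : ∀ n, Measurable (P n)) (hM : ∀ n, Measurable (M n))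
    (hP' : Monotone P) (hM' : Monotone M) (x : ℝ) :
    costM (fun t => ⨆ n, P n t) (fun t => ⨆ n, M n t) x = ⨆ n, costM (P n) (M n) x := by
  unfold costM
  rw [lintegral_iSup hP hP', lintegral_iSup hM hM', ENNReal.iSup_add_iSup_of_monotone]
  · exact fun _ _ h => lintegral_mono (hP' h)
  · exact fun _ _ h => lintegral_mono (hM' h)

/-- The limit of the increasing iterates solves the tight equations on `(-∞, 0]`, and the duality
identity bounds its cost at the origin. The bound holds along the iterates since their weighted
masses are finite (by induction, from the identity itself) and increasing. -/
lemma exists_minimal_tight {l ρ E : ℝ} (hl : 0 < l) (hE : 0 < E) (hEl : E ^ 2 = Real.exp l)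
    (hρ0 : 0 < ρ) (hρ : l * ρ = 1 + E) {H Q : ℝ → ℝ≥0∞} (hH : Measurable H) (hQ : Measurable Q)
    (hfin : ∫⁻ t in Ioc (0 : ℝ) 1, ENNReal.ofReal (Real.exp (-l * t)) * H t ≠ ∞) :
    ∃ P M : ℝ → ℝ≥0∞, Measurable P ∧ Measurable M ∧ (∀ x > 0, P x = H x) ∧ (∀ x > 0, M x = Q x) ∧
      (∀ x ≤ 0, ENNReal.ofReal ρ * P x = costP P M x) ∧
      (∀ x ≤ 0, ENNReal.ofReal ρ * M x = costM P M x) ∧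
      ENNReal.ofReal E * costP P M 0 + costM P M 0 ≤ ENNReal.ofReal (E ^ 2) *
        ∫⁻ t in Ioc (0 : ℝ) 1, ENNReal.ofReal (Real.exp (-l * t)) * H t := by
  set I := ∫⁻ t in Ioc (0 : ℝ) 1, ENNReal.ofReal (Real.exp (-l * t)) * H t with hI
  let T := tightIter ρ H Q
  have hmono : Monotone T := monotone_nat_of_le_succ (tightIter_le_succ ρ H Q)
  have hmP : Monotone fun n => (T n).1 := fun _ _ h => (hmono h).1
  have hmM : Monotone fun n => (T n).2 := fun _ _ h => (hmono h).2
  have hme := measurable_tightIter ρ hH hQ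
  have hid : ∀ n, ENNReal.ofReal E * costP (T n).1 (T n).2 0 + costM (T n).1 (T n).2 0 +
      ENNReal.ofReal (1 + E) * wmass l E (T (n + 1)).1 (T (n + 1)).2 =
      ENNReal.ofReal (E ^ 2) * I + ENNReal.ofReal (1 + E) * wmass l E (T n).1 (T n).2 := by
    intro n
    rw [wmass_identity hl hE hEl hρ (hme n).1 (hme n).2 (hme (n + 1)).1 (hme (n + 1)).2
      (fun x hx => (tightIter_succ_eq hρ0 H Q n hx).1)
      (fun x hx => (tightIter_succ_eq hρ0 H Q n hx).2)]
    congr 2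
    refine setLIntegral_congr_fun measurableSet_Ioc fun t ht => ?_
    simp only [(tightIter_pos ρ H Q n ht.1).1]
  have hw : ∀ n, wmass l E (T n).1 (T n).2 ≠ ∞ := by
    intro n
    induction n with
    | zero =>
      have h0 : ∀ t ∈ Iic (0 : ℝ), ENNReal.ofReal (Real.exp (-l * t)) * (T 0).1 t = 0 :=
        fun t ht => by simp [T, tightIter, (mem_Iic.1 ht).not_gt]
      have h0' : ∀ t ∈ Iic (0 : ℝ), ENNReal.ofReal (Real.exp (-l * t)) * (T 0).2 t = 0 :=
        fun t ht => by simp [T, tightIter, (mem_Iic.1 ht).not_gt]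
      rw [wmass, setLIntegral_congr_fun measurableSet_Iic h0,
        setLIntegral_congr_fun measurableSet_Iic h0']
      simp
    | succ n ih =>
      intro htop
      have h1 := hid n
      rw [htop, ENNReal.mul_top (by simpa using (by linarith : 0 < 1 + E)), add_top] at h1
      exact ENNReal.add_ne_top.2 ⟨ENNReal.mul_ne_top ENNReal.ofReal_ne_top hfin,
        ENNReal.mul_ne_top ENNReal.ofReal_ne_top ih⟩ h1.symm
  have hbd : ∀ n, ENNReal.ofReal E * costP (T n).1 (T n).2 0 + costM (T n).1 (T n).2 0 ≤
      ENNReal.ofReal (E ^ 2) * I := by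
    intro n
    refine ENNReal.le_of_add_le_add_right
      (ENNReal.mul_ne_top (ENNReal.ofReal_ne_top (r := 1 + E)) (hw n)) ?_
    rw [← hid n]
    gcongr
    exact wmass_mono l E (hmP n.le_succ) (hmM n.le_succ)
  have hcP := costP_iSup (fun n => (hme n).1) (fun n => (hme n).2) hmP hmM
  have hcM := costM_iSup (fun n => (hme n).1) (fun n => (hme n).2) hmP hmM
  refine ⟨fun t => ⨆ n, (T n).1 t, fun t => ⨆ n, (T n).2 t,
    .iSup fun n => (hme n).1, .iSup fun n => (hme n).2, ?_, ?_, ?_, ?_, ?_⟩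
  · intro x hx
    simp [T, fun n => (tightIter_pos ρ H Q n hx).1]
  · intro x hx
    simp [T, fun n => (tightIter_pos ρ H Q n hx).2]
  · intro x hx
    rw [hcP x, ENNReal.mul_iSup,
      ← (show Monotone fun n => ENNReal.ofReal ρ * (T n).1 x from
        fun a b h => mul_le_mul_right (hmP h x) _).iSup_nat_add 1]
    simp only [T, fun n => (tightIter_succ_eq hρ0 H Q n hx).1]
  · intro x hx
    rw [hcM x, ENNReal.mul_iSup,
      ← (show Monotone fun n => ENNReal.ofReal ρ * (T n).2 x from
        fun a b h => mul_le_mul_right (hmM h x) _).iSup_nat_add 1]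
    simp only [T, fun n => (tightIter_succ_eq hρ0 H Q n hx).2]
  · rw [hcP 0, hcM 0, ENNReal.mul_iSup, ENNReal.iSup_add_iSup_of_monotone]
    · exact iSup_le hbd
    · exact fun a b h => mul_le_mul_right (costP_mono (hmP h) (hmM h) 0) _
    · exact fun a b h => costM_mono (hmP h) (hmM h) 0

/-! ### Consequences of the tight equations -/

lemma lintegral_Iic_eq_add_Ioc (F : ℝ → ℝ≥0∞) {a b : ℝ} (h : a ≤ b) :
    ∫⁻ t in Iic b, F t = (∫⁻ t in Iic a, F t) + ∫⁻ t in Ioc a b, F t := by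
  rw [← lintegral_union measurableSet_Ioc (Iic_disjoint_Ioc le_rfl), Iic_union_Ioc_eq_Iic h]

lemma lintegral_Ioc_pos {F : ℝ → ℝ≥0∞} (hF : Measurable F) {a b : ℝ} (hab : a < b)
    (h : ∀ t ∈ Ioc a b, 0 < F t) : 0 < ∫⁻ t in Ioc a b, F t := by
  rw [setLIntegral_pos_iff hF, inter_eq_right.2 (show Ioc a b ⊆ Function.support F from fun t ht => (h t ht).ne')]
  simpa using hab

/-- Positivity on `(-n, ∞)` propagates to `(-n-1, ∞)`: the look-ahead `x + 1` in `C₋` first gives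
it for `M`, and then `C₊` gives it for `P`. -/
lemma tight_pos {ρ : ℝ} {P M : ℝ → ℝ≥0∞} (hP : Measurable P)
    (hM : Measurable M) (hP0 : ∀ x > 0, 0 < P x) (hM0 : ∀ x > 0, 0 < M x)
    (hPt : ∀ x ≤ 0, ENNReal.ofReal ρ * P x = costP P M x)
    (hMt : ∀ x ≤ 0, ENNReal.ofReal ρ * M x = costM P M x) (x : ℝ) : 0 < P x ∧ 0 < M x := by
  have key : ∀ n : ℕ, ∀ x : ℝ, -(n : ℝ) < x → 0 < P x ∧ 0 < M x := by
    intro n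
    induction n with
    | zero => intro x hx; exact ⟨hP0 x (by simpa using hx), hM0 x (by simpa using hx)⟩
    | succ n ih =>
      have hMn : ∀ x : ℝ, -((n + 1 : ℕ) : ℝ) < x → 0 < M x := by
        intro x hx
        push_cast at hx
        rcases lt_or_ge 0 x with h0 | h0
        · exact hM0 x h0
        · refine pos_of_mul_pos_right (a := ENNReal.ofReal ρ) ?_ (zero_le)
          rw [hMt x h0, costM, lintegral_Iic_eq_add_Ioc P (show -(n : ℝ) ≤ x + 1 by linarith)]
          have := lintegral_Ioc_pos hP (show -(n : ℝ) < x + 1 by linarith)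
            fun t ht => (ih t ht.1).1
          positivity
      intro x hx
      refine ⟨?_, hMn x hx⟩
      rcases lt_or_ge 0 x with h0 | h0
      · exact hP0 x h0
      · refine pos_of_mul_pos_right (a := ENNReal.ofReal ρ) ?_ (zero_le)
        rw [hPt x h0, costP, lintegral_Iic_eq_add_Ioc M hx.le]
        have := lintegral_Ioc_pos hM hx fun t ht => hMn t ht.1
        positivity
  obtain ⟨n, hn⟩ := exists_nat_gt (-x)
  exact key n x (by linarith)

lemma continuousOn_lintegral_Iic {F : ℝ → ℝ≥0∞} (hF : Measurable F) {b : ℝ}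
    (hfin : ∫⁻ t in Iic b, F t ≠ ∞) :
    ContinuousOn (fun x => (∫⁻ t in Iic x, F t).toReal) (Iic b) := by
  have h1 : IntegrableOn (fun t => (F t).toReal) (Iic b) :=
    integrable_toReal_of_lintegral_ne_top hF.aemeasurable hfin
  refine h1.continuousOn_Iic_primitive_Iic.congr fun x hx => ?_
  refine (integral_toReal hF.aemeasurable ?_).symm
  refine ae_lt_top hF (ne_top_of_le_ne_top hfin (monotone_lintegral_Iic F hx))

/-! ### The explicit positive half-line and the profile -/

/-- `∫₀¹ H` for `H(t) = max 1 (c e^{l t})`, which is `1` up to `x₀` and exponential afterwards. -/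
lemma lintegral_max_exp {l c x₀ : ℝ} (hl : 0 < l) (hc : 0 ≤ c) (hx₀ : x₀ ∈ Icc (0 : ℝ) 1)
    (hcx : c * Real.exp (l * x₀) = 1) :
    ∫⁻ t in Ioc (0 : ℝ) 1, ENNReal.ofReal (max 1 (c * Real.exp (l * t))) =
      ENNReal.ofReal (x₀ + (c * Real.exp l - 1) / l) := by
  have hle : ∀ t ≤ x₀, c * Real.exp (l * t) ≤ 1 := fun t ht => by
    rw [← hcx]; gcongr
  have hge : ∀ t, x₀ ≤ t → 1 ≤ c * Real.exp (l * t) := fun t ht => by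
    rw [← hcx]; gcongr
  rw [← Ioc_union_Ioc_eq_Ioc hx₀.1 hx₀.2,
    lintegral_union measurableSet_Ioc (Ioc_disjoint_Ioc_of_le le_rfl),
    setLIntegral_congr_fun (s := Ioc 0 x₀) (g := fun _ => 1) measurableSet_Ioc
      (fun t ht => by simp [max_eq_left (hle t ht.2)]),
    setLIntegral_congr_fun (s := Ioc x₀ 1) (g := fun t => ENNReal.ofReal (c * Real.exp (l * t)))
      measurableSet_Ioc (fun t ht => by simp only [max_eq_right (hge t ht.1.le)]),
    lintegral_exp_Ioc hc hl.ne' hx₀.2, mul_sub, hcx, mul_one, setLIntegral_const, one_mul,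
    Real.volume_Ioc, sub_zero, ENNReal.ofReal_add hx₀.1]
  have := hge 1 hx₀.2
  rw [mul_one] at this
  exact div_nonneg (by linarith) hl.le

/-- `∫₀¹ e^{-l t} H(t) dt` for `H(t) = max 1 (c e^{l t})`. -/
lemma lintegral_exp_mul_max_exp {l c x₀ : ℝ} (hl : 0 < l) (hc : 0 ≤ c)
    (hx₀ : x₀ ∈ Icc (0 : ℝ) 1) (hcx : c * Real.exp (l * x₀) = 1) :
    ∫⁻ t in Ioc (0 : ℝ) 1, ENNReal.ofReal (Real.exp (-l * t)) *
        ENNReal.ofReal (max 1 (c * Real.exp (l * t))) =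
      ENNReal.ofReal ((1 - c) / l + c * (1 - x₀)) := by
  have hle : ∀ t ≤ x₀, c * Real.exp (l * t) ≤ 1 := fun t ht => by
    rw [← hcx]; gcongr
  have hge : ∀ t, x₀ ≤ t → 1 ≤ c * Real.exp (l * t) := fun t ht => by
    rw [← hcx]; gcongr
  have hexp : ∀ t : ℝ, Real.exp (-l * t) * Real.exp (l * t) = 1 := fun t => by
    rw [← Real.exp_add]; simp
  have hcx' : Real.exp (-l * x₀) = c := by
    have := hexp x₀
    rw [← mul_one (Real.exp _), ← hcx, mul_left_comm, this, mul_one]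
  have hc1 : c ≤ 1 := by simpa using hle 0 hx₀.1
  rw [← Ioc_union_Ioc_eq_Ioc hx₀.1 hx₀.2,
    lintegral_union measurableSet_Ioc (Ioc_disjoint_Ioc_of_le le_rfl),
    setLIntegral_congr_fun (s := Ioc 0 x₀) (g := fun t => ENNReal.ofReal (1 * Real.exp (-l * t)))
      measurableSet_Ioc (fun t ht => by simp [max_eq_left (hle t ht.2)]),
    setLIntegral_congr_fun (s := Ioc x₀ 1) (g := fun t => ENNReal.ofReal c)
      measurableSet_Ioc (fun t ht => by
        simp only [max_eq_right (hge t ht.1.le)]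
        rw [← ENNReal.ofReal_mul (by positivity), mul_left_comm, hexp, mul_one]),
    lintegral_exp_Ioc zero_le_one (by linarith) hx₀.1, setLIntegral_const,
    Real.volume_Ioc, ← ENNReal.ofReal_mul hc, hcx', mul_zero, Real.exp_zero, one_mul,
    ← neg_sub 1 c, neg_div_neg_eq, ENNReal.ofReal_add]
  · exact div_nonneg (by linarith) hl.le
  · exact mul_nonneg hc (by linarith [hx₀.2])

/-- The profile in terms of the parameters `l = 2s`, `E = e^s`, `c` and the switching point `x₀`
at which `c e^{l x}` reaches `1`. The hypothesis `hχ` says that `χ` is the value forced by the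
duality identity, and `hY` is robustness of `G₋` at the origin. -/
lemma exists_profile_of_params {l E ρ c x₀ χ : ℝ} (hl : 0 < l) (hE : 0 < E)
    (hEl : E ^ 2 = Real.exp l) (hρ : l * ρ = 1 + E) (hc : 0 < c) (hx₀ : x₀ ∈ Icc (0 : ℝ) 1)
    (hcx : c * Real.exp (l * x₀) = 1)
    (hχ : (1 + E) * χ + (x₀ + (c * E ^ 2 - 1) / l) =
      E ^ 2 * ((1 - c) / l + c * (1 - x₀)))
    (hY : χ + (x₀ + (c * E ^ 2 - 1) / l) ≤ ρ * (c * E)) :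
    ∃ Gp Gm : ℝ → ℝ, ExcursionProfile ρ χ Gp Gm := by
  have hρ0 : 0 < ρ := pos_of_mul_pos_right (a := l) (by linarith) hl.le
  have hr0 : ENNReal.ofReal ρ ≠ 0 := by simpa using hρ0
  have hmono : ∀ {x y : ℝ}, x ≤ y → c * Real.exp (l * x) ≤ c * Real.exp (l * y) :=
    fun h => by gcongr
  have hle : ∀ t ≤ x₀, c * Real.exp (l * t) ≤ 1 := fun t ht => hcx ▸ hmono ht
  have hge : ∀ t, x₀ ≤ t → 1 ≤ c * Real.exp (l * t) := fun t ht => hcx ▸ hmono ht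
  set H : ℝ → ℝ≥0∞ := fun t => ENNReal.ofReal (max 1 (c * Real.exp (l * t))) with hH
  set Q : ℝ → ℝ≥0∞ := fun t => ENNReal.ofReal (c * E * Real.exp (l * t)) with hQ
  have hHm : Measurable H := by fun_prop
  have hQm : Measurable Q := by fun_prop
  have hI := lintegral_exp_mul_max_exp hl hc.le hx₀ hcx
  have hJ := lintegral_max_exp hl hc.le hx₀ hcx
  rw [← hEl] at hJ
  set J := x₀ + (c * E ^ 2 - 1) / l with hJdef
  have hJ0 : 0 ≤ J := by
    have := hge 1 hx₀.2
    rw [mul_one, ← hEl] at this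
    exact add_nonneg hx₀.1 (div_nonneg (by linarith) hl.le)
  obtain ⟨P, M, hPm, hMm, hPH, hMQ, hPt, hMt, hbound⟩ :=
    exists_minimal_tight hl hE hEl hρ0 hρ hHm hQm (by rw [hI]; exact ENNReal.ofReal_ne_top)
  rw [hI, ← ENNReal.ofReal_mul (by positivity), ← hχ] at hbound
  -- the values at the origin
  have hPI : ∀ a b : ℝ, 0 ≤ a → ∫⁻ t in Ioc a b, P t = ∫⁻ t in Ioc a b, H t :=
    fun a b ha => setLIntegral_congr_fun measurableSet_Ioc
      fun t ht => hPH t (ha.trans_lt ht.1)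
  have hMI : ∀ a b : ℝ, 0 ≤ a → ∫⁻ t in Ioc a b, M t = ∫⁻ t in Ioc a b, Q t :=
    fun a b ha => setLIntegral_congr_fun measurableSet_Ioc
      fun t ht => hMQ t (ha.trans_lt ht.1)
  have hM0 : costM P M 0 = costP P M 0 + ENNReal.ofReal J := by
    rw [costM, costP, zero_add, lintegral_Iic_eq_add_Ioc P zero_le_one, hPI 0 1 le_rfl, hJ]
    ring
  have hχfin : costP P M 0 ≠ ∞ := by
    refine ne_top_of_le_ne_top ENNReal.ofReal_ne_top (le_trans ?_ hbound)
    rw [hM0]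
    exact le_add_left le_self_add
  have hχb : (costP P M 0).toReal ≤ χ := by
    rw [hM0, ← ENNReal.ofReal_toReal hχfin, ← ENNReal.ofReal_mul hE.le,
      ← ENNReal.ofReal_add ENNReal.toReal_nonneg hJ0,
      ← ENNReal.ofReal_add (by positivity) (by positivity)] at hbound
    have hpos : 0 ≤ (1 + E) * χ + J := by
      rw [hχ]
      have h1 : c ≤ 1 := by simpa using hle 0 hx₀.1
      have h2 := hx₀.2
      exact mul_nonneg (by positivity) (add_nonneg (div_nonneg (by linarith) hl.le)
        (mul_nonneg hc.le (by linarith)))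
    rw [ENNReal.ofReal_le_ofReal_iff hpos] at hbound
    have : (1 + E) * (costP P M 0).toReal ≤ (1 + E) * χ := by linarith
    exact le_of_mul_le_mul_left this (by linarith)
  have hχ0 : 0 ≤ χ := ENNReal.toReal_nonneg.trans hχb
  have hP0 : costP P M 0 ≤ ENNReal.ofReal χ := by
    rw [← ENNReal.ofReal_toReal hχfin]
    exact ENNReal.ofReal_le_ofReal hχb
  have hM0' : costM P M 0 ≤ ENNReal.ofReal (ρ * (c * E)) := by
    rw [hM0]
    refine (add_le_add_left hP0 _).trans ?_
    rw [← ENNReal.ofReal_add hχ0 hJ0]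
    exact ENNReal.ofReal_le_ofReal hY
  -- robustness on the right half-line
  have hexp1 : ∀ x : ℝ, Real.exp (l * (x + 1)) = E ^ 2 * Real.exp (l * x) := fun x => by
    rw [hEl, ← Real.exp_add]; congr 1; ring
  have hcM : ∀ x ≥ 0, costM P M x ≤ ENNReal.ofReal (ρ * (c * E * Real.exp (l * x))) := by
    intro x hx
    have hx1 : 1 ≤ Real.exp (l * x) := Real.one_le_exp (by positivity)
    have hsplit : costM P M x = costM P M 0 +
        ((∫⁻ t in Ioc 1 (x + 1), P t) + ∫⁻ t in Ioc 0 x, M t) := by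
      rw [costM, costM, zero_add, lintegral_Iic_eq_add_Ioc P (by linarith : 1 ≤ x + 1),
        lintegral_Iic_eq_add_Ioc M hx]
      ring
    have hH1 : ∫⁻ t in Ioc 1 (x + 1), H t =
        ∫⁻ t in Ioc 1 (x + 1), ENNReal.ofReal (c * Real.exp (l * t)) :=
      setLIntegral_congr_fun measurableSet_Ioc fun t ht => by
        simp only [hH, max_eq_right (hge t (hx₀.2.trans ht.1.le))]
    rw [hsplit, hPI _ _ zero_le_one, hMI _ _ le_rfl, hH1,
      lintegral_exp_Ioc hc.le hl.ne' (by linarith), hQ,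
      lintegral_exp_Ioc (by positivity) hl.ne' hx, hexp1, mul_one, ← hEl, mul_zero,
      Real.exp_zero]
    refine (add_le_add_left hM0' _).trans ?_
    rw [← ENNReal.ofReal_add, ← ENNReal.ofReal_add]
    · refine ENNReal.ofReal_le_ofReal (le_of_eq ?_)
      have : ρ = (1 + E) / l := by field_simp; linarith
      rw [this]
      field_simp
      ring
    · positivity
    · have : 0 ≤ Real.exp (l * x) - 1 := by linarith
      have h2 : 0 ≤ E ^ 2 * Real.exp (l * x) - E ^ 2 := by nlinarith [sq_nonneg E]
      positivity
    · have h2 : 0 ≤ E ^ 2 * Real.exp (l * x) - E ^ 2 := by nlinarith [sq_nonneg E]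
      positivity
    · have : 0 ≤ Real.exp (l * x) - 1 := by linarith
      positivity
  have hcP1 : ∀ x ≥ 1, costP P M x ≤ ENNReal.ofReal (ρ * (c * Real.exp (l * x))) := by
    intro x hx
    have hsplit : costP P M x = costM P M (x - 1) + ∫⁻ t in Ioc (x - 1) x, M t := by
      rw [costM, costP, sub_add_cancel,
        lintegral_Iic_eq_add_Ioc M (by linarith : x - 1 ≤ x)]
      ring
    have hexp2 : Real.exp (l * x) = E ^ 2 * Real.exp (l * (x - 1)) := by
      rw [← hexp1, sub_add_cancel]
    have hmon : Real.exp (l * (x - 1)) ≤ Real.exp (l * x) := by gcongr; linarith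
    rw [hsplit, hMI _ _ (by linarith), hQ,
      lintegral_exp_Ioc (by positivity) hl.ne' (by linarith)]
    refine (add_le_add_left (hcM (x - 1) (by linarith)) _).trans ?_
    rw [← ENNReal.ofReal_add (by positivity)]
    · refine ENNReal.ofReal_le_ofReal (le_of_eq ?_)
      rw [hexp2]
      have : ρ = (1 + E) / l := by field_simp; linarith
      rw [this]
      field_simp
      ring
    · have := sub_nonneg.2 hmon
      positivity
  have hcPm : ∀ x ∈ Icc x₀ 1, costP P M x ≤ ENNReal.ofReal (ρ * (c * Real.exp (l * x))) := by
    intro x hx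
    have hx0 : 0 ≤ x := hx₀.1.trans hx.1
    have hmon : Real.exp (l * x) ≤ Real.exp (l * 1) := by gcongr; exact hx.2
    have hsplit : costP P M 1 = costP P M x +
        ((∫⁻ t in Ioc x 1, P t) + ∫⁻ t in Ioc x 1, M t) := by
      rw [costP, costP, lintegral_Iic_eq_add_Ioc P hx.2, lintegral_Iic_eq_add_Ioc M hx.2]
      ring
    have hH1 : ∫⁻ t in Ioc x 1, H t =
        ∫⁻ t in Ioc x 1, ENNReal.ofReal (c * Real.exp (l * t)) :=
      setLIntegral_congr_fun measurableSet_Ioc fun t ht => by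
        simp only [hH, max_eq_right (hge t (hx.1.trans ht.1.le))]
    have h1 := hcP1 1 le_rfl
    have hd := sub_nonneg.2 hmon
    have hρ' : ρ = (1 + E) / l := by field_simp; linarith
    have hsum : ρ * (c * Real.exp (l * 1)) = ρ * (c * Real.exp (l * x)) +
        (c * (Real.exp (l * 1) - Real.exp (l * x)) / l +
          c * E * (Real.exp (l * 1) - Real.exp (l * x)) / l) := by
      rw [hρ']
      field_simp
      ring
    rw [hsplit, hPI _ _ hx0, hMI _ _ hx0, hH1, lintegral_exp_Ioc hc.le hl.ne' hx.2, hQ,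
      lintegral_exp_Ioc (by positivity) hl.ne' hx.2,
      ← ENNReal.ofReal_add (p := c * (_ - _) / l) (by positivity) (by positivity), hsum,
      ENNReal.ofReal_add (p := ρ * _) (by positivity) (by positivity)] at h1
    exact ENNReal.le_of_add_le_add_right ENNReal.ofReal_ne_top h1
  have hcP0 : ∀ x ≤ x₀, costP P M x ≤ ENNReal.ofReal ρ := by
    intro x hx
    have := hcPm x₀ ⟨le_rfl, hx₀.2⟩
    rw [hcx, mul_one] at this
    exact (monotone_costP P M hx).trans this
  have hcP : ∀ x, costP P M x ≤ ENNReal.ofReal (ρ * max 1 (c * Real.exp (l * x))) := by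
    intro x
    rcases le_total x x₀ with h | h
    · refine (hcP0 x h).trans (ENNReal.ofReal_le_ofReal ?_)
      exact le_mul_of_one_le_right hρ0.le (le_max_left _ _)
    · have h2 : costP P M x ≤ ENNReal.ofReal (ρ * (c * Real.exp (l * x))) := by
        rcases le_total x 1 with h' | h'
        · exact hcPm x ⟨h, h'⟩
        · exact hcP1 x h'
      refine h2.trans (ENNReal.ofReal_le_ofReal ?_)
      gcongr
      exact le_max_right _ _
  -- passage to real-valued functions
  have hcPtop : ∀ x, costP P M x ≠ ∞ := fun x =>
    ne_top_of_le_ne_top ENNReal.ofReal_ne_top (hcP x)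
  have hcMtop : ∀ x, costM P M x ≠ ∞ := fun x =>
    ne_top_of_le_ne_top ENNReal.ofReal_ne_top
      ((monotone_costM P M (le_max_left x 0)).trans (hcM _ (le_max_right x 0)))
  have hPeq : ∀ x ≤ 0, P x = costP P M x / ENNReal.ofReal ρ := fun x hx => by
    rw [← hPt x hx, mul_comm, ENNReal.mul_div_cancel_right hr0 ENNReal.ofReal_ne_top]
  have hMeq : ∀ x ≤ 0, M x = costM P M x / ENNReal.ofReal ρ := fun x hx => by
    rw [← hMt x hx, mul_comm, ENNReal.mul_div_cancel_right hr0 ENNReal.ofReal_ne_top]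
  have hPtop : ∀ x, P x ≠ ∞ := fun x => by
    rcases lt_or_ge 0 x with h | h
    · rw [hPH x h]; exact ENNReal.ofReal_ne_top
    · rw [hPeq x h]; exact ENNReal.div_ne_top (hcPtop x) hr0
  have hMtop : ∀ x, M x ≠ ∞ := fun x => by
    rcases lt_or_ge 0 x with h | h
    · rw [hMQ x h]; exact ENNReal.ofReal_ne_top
    · rw [hMeq x h]; exact ENNReal.div_ne_top (hcMtop x) hr0
  have hpos := tight_pos hPm hMm
    (fun x hx => by
      rw [hPH x hx]; exact ENNReal.ofReal_pos.2 (lt_of_lt_of_le one_pos (le_max_left _ _)))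
    (fun x hx => by rw [hMQ x hx]; exact ENNReal.ofReal_pos.2 (by positivity)) hPt hMt
  have hPmono : Monotone P := by
    intro x y hxy
    rcases lt_or_ge 0 y with hy | hy
    · rcases lt_or_ge 0 x with hx | hx
      · rw [hPH x hx, hPH y hy]
        exact ENNReal.ofReal_le_ofReal (max_le_max le_rfl (hmono hxy))
      · rw [hPeq x hx, hPH y hy]
        refine ENNReal.div_le_of_le_mul ((hcP0 x (hx.trans hx₀.1)).trans ?_)
        rw [hH, ← ENNReal.ofReal_mul' hρ0.le]
        exact ENNReal.ofReal_le_ofReal (le_mul_of_one_le_left hρ0.le (le_max_left _ _))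
    · rw [hPeq x (hxy.trans hy), hPeq y hy]
      exact ENNReal.div_le_div_right (monotone_costP P M hxy) _
  have hMmono : Monotone M := by
    intro x y hxy
    rcases lt_or_ge 0 y with hy | hy
    · rcases lt_or_ge 0 x with hx | hx
      · rw [hMQ x hx, hMQ y hy]
        exact ENNReal.ofReal_le_ofReal (by gcongr)
      · rw [hMeq x hx, hMQ y hy]
        refine ENNReal.div_le_of_le_mul
          (((monotone_costM P M hx).trans hM0').trans ?_)
        rw [hQ, ← ENNReal.ofReal_mul' hρ0.le, mul_comm]
        refine ENNReal.ofReal_le_ofReal ?_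
        refine mul_le_mul_of_nonneg_right ?_ hρ0.le
        exact le_mul_of_one_le_right (by positivity) (Real.one_le_exp (by positivity))
    · rw [hMeq x (hxy.trans hy), hMeq y hy]
      exact ENNReal.div_le_div_right (monotone_costM P M hxy) _
  have hcPcont : ContinuousOn (fun x => (P x).toReal) (Iic 0) := by
    have h1 := continuousOn_lintegral_Iic hPm (b := 0)
      (ne_top_of_le_ne_top (hcPtop 0) le_self_add)
    have h2 := continuousOn_lintegral_Iic hMm (b := 0)
      (ne_top_of_le_ne_top (hcPtop 0) (le_add_self))
    refine ((h1.add h2).div_const ρ).congr fun x hx => ?_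
    rw [hPeq x hx, ENNReal.toReal_div, ENNReal.toReal_ofReal hρ0.le, costP, ENNReal.toReal_add]
    · rfl
    · exact ne_top_of_le_ne_top (hcPtop x) le_self_add
    · exact ne_top_of_le_ne_top (hcPtop x) le_add_self
  have hcMcont : ContinuousOn (fun x => (M x).toReal) (Iic 0) := by
    have h1 := continuousOn_lintegral_Iic hPm (b := 1)
      (ne_top_of_le_ne_top (hcPtop 1) le_self_add)
    have h1' : ContinuousOn (fun x => (∫⁻ t in Iic (x + 1), P t).toReal) (Iic (0 : ℝ)) :=
      h1.comp (f := fun x : ℝ => x + 1) (by fun_prop)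
        (fun x hx => by simpa using hx)
    have h2 := continuousOn_lintegral_Iic hMm (b := 0)
      (ne_top_of_le_ne_top (hcPtop 0) (le_add_self))
    refine ((h1'.add h2).div_const ρ).congr fun x hx => ?_
    rw [hMeq x hx, ENNReal.toReal_div, ENNReal.toReal_ofReal hρ0.le, costM, ENNReal.toReal_add]
    · rfl
    · exact ne_top_of_le_ne_top (hcMtop x) le_self_add
    · exact ne_top_of_le_ne_top (hcMtop x) le_add_self
  have hCP : ∀ x, Cplus (fun x => (P x).toReal) (fun x => (M x).toReal) x = costP P M x := by
    intro x
    simp only [Cplus, costP, ENNReal.ofReal_toReal (hPtop _), ENNReal.ofReal_toReal (hMtop _)]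
  have hCM : ∀ x, Cminus (fun x => (P x).toReal) (fun x => (M x).toReal) x = costM P M x := by
    intro x
    simp only [Cminus, costM, ENNReal.ofReal_toReal (hPtop _), ENNReal.ofReal_toReal (hMtop _)]
  refine ⟨fun x => (P x).toReal, fun x => (M x).toReal,
    fun x y h => ENNReal.toReal_mono (hPtop y) (hPmono h),
    fun x y h => ENNReal.toReal_mono (hMtop y) (hMmono h), ?_, ?_,
    fun x => ENNReal.toReal_pos (hpos x).1.ne' (hPtop x),
    fun x => ENNReal.toReal_pos (hpos x).2.ne' (hMtop x), ?_, ?_, ?_, ?_, ?_⟩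
  · intro x
    rcases lt_or_ge 0 x with h | h
    · have hc : Continuous fun t : ℝ => max 1 (c * Real.exp (l * t)) := by fun_prop
      refine (hc.continuousAt.congr ?_).continuousWithinAt
      filter_upwards [lt_mem_nhds h] with t ht
      rw [hPH t ht, hH, ENNReal.toReal_ofReal (le_max_of_le_left zero_le_one)]
    · exact (hcPcont x h).mono (Iic_subset_Iic.2 h)
  · intro x
    rcases lt_or_ge 0 x with h | h
    · have hc : Continuous fun t : ℝ => c * E * Real.exp (l * t) := by fun_prop
      refine (hc.continuousAt.congr ?_).continuousWithinAt
      filter_upwards [lt_mem_nhds h] with t ht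
      rw [hMQ t ht, hQ, ENNReal.toReal_ofReal (by positivity)]
    · exact (hcMcont x h).mono (Iic_subset_Iic.2 h)
  · intro x hx
    simp only [hPH x hx, hH, ENNReal.toReal_ofReal (le_max_of_le_left zero_le_one (c := c * Real.exp (l * x)))]
    exact le_max_left _ _
  · -- strictness comes from the positive mass of `P` on `(x, 0]`
    intro x hx
    have h1 : costP P M x < costP P M 0 := by
      refine ENNReal.add_lt_add_of_lt_of_le
        (ne_top_of_le_ne_top (hcPtop x) le_add_self) ?_ (monotone_lintegral_Iic M hx.le)
      rw [lintegral_Iic_eq_add_Ioc P hx.le]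
      exact ENNReal.lt_add_right (ne_top_of_le_ne_top (hcPtop x) le_self_add)
        (lintegral_Ioc_pos hPm hx fun t _ => (hpos t).1).ne'
    have h2 := (ENNReal.toReal_lt_toReal (hcPtop x) ENNReal.ofReal_ne_top).2
      (h1.trans_le (hcP0 0 hx₀.1))
    simp only [hPeq x hx.le, ENNReal.toReal_div]
    rw [ENNReal.toReal_ofReal hρ0.le] at h2 ⊢
    exact (div_lt_one hρ0).2 h2
  · intro x
    rw [hCP, ENNReal.ofReal_mul hρ0.le, ENNReal.ofReal_toReal (hPtop x)]
    rcases lt_or_ge 0 x with h | h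
    · rw [hPH x h, hH, ← ENNReal.ofReal_mul hρ0.le]; exact hcP x
    · exact (hPt x h).ge
  · intro x
    rw [hCM, ENNReal.ofReal_mul hρ0.le, ENNReal.ofReal_toReal (hMtop x)]
    rcases lt_or_ge 0 x with h | h
    · rw [hMQ x h, hQ, ← ENNReal.ofReal_mul hρ0.le]; exact hcM x h.le
    · exact (hMt x h).ge
  · rw [hCP]; exact hP0

/-! ### The parameters of the two regimes -/

/-- `K(s) ≤ 1` for `s ≤ s_K`, because `K(u) = v (e^u - 1) + 2 u v²` with `v = e^u / (1 + e^u)`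
is increasing in `u`. -/
lemma K_le_one {s t : ℝ} (hs : 0 < s) (hst : s ≤ t)
    (ht : Real.exp t * (Real.exp (2 * t) - 1 + 2 * t * Real.exp t) = (1 + Real.exp t) ^ 2) :
    Real.exp s * (Real.exp (2 * s) - 1 + 2 * s * Real.exp s) ≤ (1 + Real.exp s) ^ 2 := by
  have hform : ∀ u : ℝ, Real.exp u * (Real.exp (2 * u) - 1 + 2 * u * Real.exp u) =
      (1 + Real.exp u) ^ 2 * (Real.exp u / (1 + Real.exp u) * (Real.exp u - 1) +
        2 * u * (Real.exp u / (1 + Real.exp u)) ^ 2) := by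
    intro u
    have : Real.exp (2 * u) = Real.exp u ^ 2 := by rw [← Real.exp_nat_mul]; norm_cast
    have h : 0 < Real.exp u := Real.exp_pos u
    rw [this]
    field_simp
    ring
  have hfrac : ∀ u : ℝ, Real.exp u / (1 + Real.exp u) = 1 - 1 / (1 + Real.exp u) := fun u => by
    have h : 0 < Real.exp u := Real.exp_pos u
    field_simp
    ring
  rw [hform] at ht ⊢
  have h1 : Real.exp t / (1 + Real.exp t) * (Real.exp t - 1) +
        2 * t * (Real.exp t / (1 + Real.exp t)) ^ 2 = 1 := by
    have : (0 : ℝ) < (1 + Real.exp t) ^ 2 := by positivity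
    exact mul_left_cancel₀ this.ne' (by rw [ht, mul_one])
  refine mul_le_of_le_one_right (by positivity) (le_trans ?_ h1.le)
  have hfm : Real.exp s / (1 + Real.exp s) ≤ Real.exp t / (1 + Real.exp t) := by
    rw [hfrac, hfrac]
    gcongr
  have h2 : 0 ≤ Real.exp s - 1 := by linarith [Real.add_one_le_exp s]
  have h3 : 0 ≤ t := hs.le.trans hst
  gcongr

theorem exists_linear_search_excursion_profile
    (sstar : ℝ) (hstar1 : 1 < sstar) (hstar2 : (sstar - 1) * Real.exp sstar = 1)
    (sK : ℝ) (hsK : 0 < sK ∧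
      Real.exp sK * (Real.exp (2 * sK) - 1 + 2 * sK * Real.exp sK) = (1 + Real.exp sK) ^ 2)
    (s : ℝ) (hs : s ∈ Set.Ioc (0 : ℝ) sstar)
    (K χ : ℝ)
    (hKχ :
      (s ≤ sK ∧
        K = Real.exp s * (Real.exp (2 * s) - 1 + 2 * s * Real.exp s) / (1 + Real.exp s) ^ 2 ∧
        χ = (Real.exp (2 * s) - 1 - 2 * s) / (2 * s * (1 + Real.exp s))) ∨
      (sK < s ∧
        K ∈ Set.Icc 1 (Real.exp (2 * s)) ∧
        (Real.exp s - K) * Real.log K + K * (3 + Real.exp (-s)) =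
          Real.exp s * (Real.exp s + 2 * s - 1) ∧
        χ = (Real.exp (2 * s) + 1 + (1 + K) * Real.log K - 2 * K - 2 * s) /
          (2 * s * (1 + Real.exp s)))) :
    ∃ Gp Gm : ℝ → ℝ, ExcursionProfile ((1 + Real.exp s) / (2 * s)) χ Gp Gm := by
  have hs0 : 0 < s := hs.1
  have hE : 0 < Real.exp s := Real.exp_pos s
  have hE2 : Real.exp (2 * s) = Real.exp s ^ 2 := by rw [← Real.exp_nat_mul]; norm_cast
  rcases hKχ with ⟨hsle, -, hχ⟩ | ⟨-, hK, hKeq, hχ⟩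
  · -- `G₊ = 1` up to `x₀ = 1`; since `K ≤ 1`, `G₋` jumps up to `e^{-s}` at the origin
    have hK1 := K_le_one hs0 hsle hsK.2
    rw [hE2] at hχ hK1
    refine exists_profile_of_params (l := 2 * s) (E := Real.exp s) (c := 1 / Real.exp s ^ 2)
      (x₀ := 1) (by positivity) hE hE2.symm (by field_simp) (by positivity)
      ⟨zero_le_one, le_rfl⟩ (by rw [mul_one, hE2]; field_simp) ?_ ?_
    · rw [hχ]
      field_simp
      ring
    · rw [hχ]
      have h : (1 + Real.exp s) / (2 * s) * (1 / Real.exp s ^ 2 * Real.exp s) -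
          ((Real.exp s ^ 2 - 1 - 2 * s) / (2 * s * (1 + Real.exp s)) +
            (1 + (1 / Real.exp s ^ 2 * Real.exp s ^ 2 - 1) / (2 * s))) =
          ((1 + Real.exp s) ^ 2 - Real.exp s * (Real.exp s ^ 2 - 1 + 2 * s * Real.exp s)) /
            (2 * s * (1 + Real.exp s) * Real.exp s) := by
        field_simp
        ring
      rw [← sub_nonneg, h]
      exact div_nonneg (by linarith) (by positivity)
  · -- `G₊` leaves `1` at `x₀ = 1 - log K / (2s)`; `hKeq` says `C₋(0) = ρ K e^{-s}`
    have hK0 : 0 < K := by linarith [hK.1]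
    have hlog0 : 0 ≤ Real.log K := Real.log_nonneg hK.1
    have hlog1 : Real.log K ≤ 2 * s := (Real.log_le_iff_le_exp hK0).2 hK.2
    rw [Real.exp_neg] at hKeq
    rw [hE2] at hχ
    refine exists_profile_of_params (l := 2 * s) (E := Real.exp s) (c := K / Real.exp s ^ 2)
      (x₀ := 1 - Real.log K / (2 * s)) (by positivity) hE hE2.symm (by field_simp)
      (by positivity) ⟨?_, ?_⟩ ?_ ?_ ?_
    · rw [sub_nonneg, div_le_one (by positivity)]; exact hlog1
    · rw [sub_le_self_iff]; positivity
    · rw [show 2 * s * (1 - Real.log K / (2 * s)) = 2 * s - Real.log K by field_simp,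
        Real.exp_sub, Real.exp_log hK0, hE2]
      field_simp
    · rw [hχ]
      field_simp
      ring
    · rw [hχ]
      refine le_of_eq ?_
      field_simp at hKeq ⊢
      linear_combination -hKeq
end

section
/- For every t ∈ (0,1], every randomized linear-search strategy μ with cost_μ(+1) ≤ 1 + 2·t·(t+2)²/(−t³ + 3t + 4) satisfies sup over targets T ≠ 0 of cost_μ(T)/|T| ≥ 1 + 4·(t² + t + 1)/(t·(−t³ + 3t + 4)); i.e., any (1 + 2t(t+2)²/(−t³+3t+4))-consistent randomized linear-search strategy has robustness ratio at least 1 + 4(t²+t+1)/(t(−t³+3t+4)). -/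
/-! By Yao's principle it suffices to exhibit a measure `ν` on targets which is expensive for every
deterministic strategy. Put `h = 1 + t + t²`, `A = t(t+2)/h`, `B = tA`, `m = 1 - t²`,
`k = (1+2t)/A`, and let `ν` be an atom of mass `m` at the prediction `1`, plus density `h` on
`[-A, 0)`, plus density `k` on `(0, B]`.

Write `S(T)` for the sum of the excursions made before `T` is reached. The integral of `S` against
`ν` is the sum over all excursions `n` of `|y n|` times the `ν`-mass still unexplored after
excursion `n`. Call `F a = h (A - a)⁺` and `G b = k (B - b)⁺ + m·1[b < 1]` the unexplored masses on
the two sides once `[-a, b]` is explored. The inequality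
`F a ≤ b (F a + G b) + a' (F a' + G b) + F a'` for `a ≤ a'` (`potential_step`) says that `F` is a
lower bound for the remaining cost just before an excursion to the right; it rests on the
concavity of the right-hand side in `a'` and in `b`. Telescoping backwards in time from an excursion
past `1` gives `∫ S dν ≥ F 0 = t(t+2)` (`lintegral_lsPrefix_ge`), because the turning points of a
strategy with `S(1) < ∞` tend to `0` at `-∞`.

Integrating over the strategies with Tonelli bounds `(1 - t²) cost(1) + R ∫ |T| dν'` from below,
where `R` is the robustness ratio and `ν'` is `ν` without its atom, with `∫ |T| dν' = t²(t+2)`.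
Inserting the consistency bound gives exactly the claimed bound on `R`. -/

open MeasureTheory Set
open scoped ENNReal

/-- A deterministic linear-search strategy: a bi-infinite sequence of nonzero,
sign-alternating excursion endpoints whose magnitudes increase along each parity. -/
def IsLSStrategy (y : ℤ → ℝ) : Prop :=
  ∀ n : ℤ, y n ≠ 0 ∧ Real.sign (y (n + 1)) ≠ Real.sign (y n) ∧ |y n| < |y (n + 2)|

/-- The cost of a deterministic linear-search strategy `y` at target `T`:
`|T| + 2·∑_{n < n⁎} |y_n|` where `n⁎` is the first index whose excursion reaches `T`
(the infimum over all qualifying indices of the corresponding prefix sums; it is `∞`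
when no index qualifies). -/
noncomputable def lsDetCost (y : ℤ → ℝ) (T : ℝ) : ℝ≥0∞ :=
  ENNReal.ofReal |T| +
    2 * ⨅ (n : ℤ) (_ : Real.sign (y n) = Real.sign T ∧ |T| ≤ |y n|),
      ∑' m : ℤ, (if m < n then ENNReal.ofReal |y m| else 0)

/-- Expected cost of a randomized linear-search strategy at target `T`. -/
noncomputable def lsCost (μ : Measure (ℤ → ℝ)) (T : ℝ) : ℝ≥0∞ :=
  ∫⁻ y, lsDetCost y T ∂μ

/-! ### Measurability of the cost -/

/-- The total length of the excursions made before the target `T` is reached. -/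
noncomputable def lsPrefix (y : ℤ → ℝ) (T : ℝ) : ℝ≥0∞ :=
  ⨅ (n : ℤ) (_ : Real.sign (y n) = Real.sign T ∧ |T| ≤ |y n|),
      ∑' m : ℤ, (if m < n then ENNReal.ofReal |y m| else 0)

lemma measurable_real_sign : Measurable Real.sign := by
  unfold Real.sign
  exact Measurable.ite measurableSet_Iio measurable_const
    (Measurable.ite measurableSet_Ioi measurable_const measurable_const)

lemma measurable_lsPrefix : Measurable fun p : (ℤ → ℝ) × ℝ => lsPrefix p.1 p.2 := by
  classical
  unfold lsPrefix
  refine Measurable.iInf fun n => ?_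
  have hy : ∀ n : ℤ, Measurable fun p : (ℤ → ℝ) × ℝ => p.1 n := fun n =>
    (measurable_pi_apply n).comp measurable_fst
  have habs : ∀ n : ℤ, Measurable fun p : (ℤ → ℝ) × ℝ => |p.1 n| := fun n =>
    continuous_abs.measurable.comp (hy n)
  have hset : MeasurableSet {p : (ℤ → ℝ) × ℝ |
      Real.sign (p.1 n) = Real.sign p.2 ∧ |p.2| ≤ |p.1 n|} :=
    (measurableSet_eq_fun (measurable_real_sign.comp (hy n))
      (measurable_real_sign.comp measurable_snd)).inter
      (measurableSet_le (continuous_abs.measurable.comp measurable_snd) (habs n))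
  simp only [iInf_eq_if]
  refine Measurable.ite hset (Measurable.tsum fun j => ?_) measurable_const
  split_ifs
  · exact (habs j).ennreal_ofReal
  · exact measurable_const

lemma lsDetCost_eq (y : ℤ → ℝ) (T : ℝ) :
    lsDetCost y T = ENNReal.ofReal |T| + 2 * lsPrefix y T := rfl

lemma measurable_lsDetCost : Measurable fun p : (ℤ → ℝ) × ℝ => lsDetCost p.1 p.2 := by
  simp only [lsDetCost_eq]
  exact (continuous_abs.measurable.comp measurable_snd).ennreal_ofReal.add
    (measurable_lsPrefix.const_mul 2)

/-! ### Structure of deterministic strategies -/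

lemma IsLSStrategy.mul_neg {y : ℤ → ℝ} (hy : IsLSStrategy y) (n : ℤ) : y (n + 1) * y n < 0 := by
  obtain ⟨h0, hs, -⟩ := hy n
  have h1 := (hy (n + 1)).1
  rcases lt_or_gt_of_ne h0 with h0 | h0 <;> rcases lt_or_gt_of_ne h1 with h1 | h1
  · exact absurd (by rw [Real.sign_of_neg h0, Real.sign_of_neg h1]) hs
  · exact mul_neg_of_pos_of_neg h1 h0
  · exact mul_neg_of_neg_of_pos h1 h0
  · exact absurd (by rw [Real.sign_of_pos h0, Real.sign_of_pos h1]) hs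

lemma IsLSStrategy.abs_le {y : ℤ → ℝ} (hy : IsLSStrategy y) (n : ℤ) (k : ℕ) :
    |y (n - 2 * k)| ≤ |y n| := by
  induction k with
  | zero => simp
  | succ k ih =>
    refine le_trans (le_trans (hy _).2.2.le (le_of_eq ?_)) ih
    congr 2; push_cast; ring

lemma IsLSStrategy.signs {y : ℤ → ℝ} (hy : IsLSStrategy y) {p : ℤ} (hp : 0 < y p) (k : ℕ) :
    0 < y (p - 2 * k) ∧ y (p - 1 - 2 * k) < 0 := by
  have key : ∀ q : ℤ, 0 < y q → y (q - 1) < 0 := fun q hq => by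
    have := hy.mul_neg (q - 1)
    rw [sub_add_cancel] at this
    exact (pos_iff_neg_of_mul_neg this).1 hq
  have key' : ∀ q : ℤ, y q < 0 → 0 < y (q - 1) := fun q hq => by
    have := hy.mul_neg (q - 1)
    rw [sub_add_cancel] at this
    exact (neg_iff_pos_of_mul_neg this).1 hq
  induction k with
  | zero => simpa using ⟨hp, key p hp⟩
  | succ k ih =>
    have h1 := key' _ ih.2
    have h2 := key _ h1
    constructor
    · convert h1 using 2; push_cast; ring
    · convert h2 using 2; push_cast; ring

/-- The targets still unexplored after excursion `n`. -/
def unexplored (y : ℤ → ℝ) (n : ℤ) : Set ℝ :=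
  Iio (min (y n) (y (n - 1))) ∪ Ioi (max (y n) (y (n - 1)))

lemma measurableSet_unexplored (y : ℤ → ℝ) (n : ℤ) : MeasurableSet (unexplored y n) :=
  measurableSet_Iio.union measurableSet_Ioi

lemma notMem_unexplored {y : ℤ → ℝ} (hy : IsLSStrategy y) {j n : ℤ} (hjn : j ≤ n) {T : ℝ}
    (hs : Real.sign (y j) = Real.sign T) (hT : |T| ≤ |y j|) : T ∉ unexplored y n := by
  -- `y j` has the parity, hence the sign, of one of the last two excursions, which goes further
  have hopp := hy.mul_neg (n - 1)
  rw [sub_add_cancel] at hopp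
  have habs : |T| ≤ |y n| ∧ Real.sign (y n) = Real.sign T ∨
      |T| ≤ |y (n - 1)| ∧ Real.sign (y (n - 1)) = Real.sign T := by
    have sgn : ∀ (k : ℕ) (q : ℤ), Real.sign (y (q - 2 * k)) = Real.sign (y q) := by
      intro k q
      rcases lt_or_gt_of_ne (hy q).1 with h | h
      · have h1 : 0 < y (q + 1) := by
          have := hy.mul_neg q
          exact (pos_iff_neg_of_mul_neg this).2 h
        have := (hy.signs h1 k).2
        rw [add_sub_cancel_right] at this
        rw [Real.sign_of_neg h, Real.sign_of_neg this]
      · rw [Real.sign_of_pos h, Real.sign_of_pos (hy.signs h k).1]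
    rcases Int.even_or_odd' (n - j) with ⟨c, hc | hc⟩
    · left
      obtain ⟨k, rfl⟩ := Int.eq_ofNat_of_zero_le (show 0 ≤ c by omega)
      have hj : j = n - 2 * (k : ℕ) := by omega
      rw [hj] at hs hT
      exact ⟨hT.trans (hy.abs_le n k), by rw [← hs, sgn]⟩
    · right
      obtain ⟨k, rfl⟩ := Int.eq_ofNat_of_zero_le (show 0 ≤ c by omega)
      have hj : j = n - 1 - 2 * (k : ℕ) := by omega
      rw [hj] at hs hT
      exact ⟨hT.trans (hy.abs_le (n - 1) k), by rw [← hs, sgn]⟩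
  have main : ∀ u v : ℝ, u * v < 0 → |T| ≤ |u| → Real.sign u = Real.sign T →
      min u v ≤ T ∧ T ≤ max u v := by
    intro u v huv hTu hsg
    have hu : u ≠ 0 := by rintro rfl; simp at huv
    rcases lt_or_gt_of_ne hu with h | h
    · have hT0 : T < 0 := by
        by_contra hc
        rw [Real.sign_of_neg h] at hsg
        rcases (not_lt.1 hc).eq_or_lt with h0 | h0
        · rw [← h0, Real.sign_zero] at hsg; norm_num at hsg
        · rw [Real.sign_of_pos h0] at hsg; norm_num at hsg
      have hv : 0 < v := (neg_iff_pos_of_mul_neg huv).1 h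
      rw [abs_of_neg hT0, abs_of_neg h] at hTu
      exact ⟨(min_le_left _ _).trans (by linarith), le_trans (by linarith) (le_max_right _ _)⟩
    · have hT0 : 0 < T := by
        by_contra hc
        rw [Real.sign_of_pos h] at hsg
        rcases (not_lt.1 hc).eq_or_lt with h0 | h0
        · rw [h0, Real.sign_zero] at hsg; norm_num at hsg
        · rw [Real.sign_of_neg h0] at hsg; norm_num at hsg
      have hv : v < 0 := (pos_iff_neg_of_mul_neg huv).1 h
      rw [abs_of_pos hT0, abs_of_pos h] at hTu
      exact ⟨(min_le_right _ _).trans (by linarith), le_trans (by linarith) (le_max_left _ _)⟩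
  have hmm : min (y n) (y (n - 1)) ≤ T ∧ T ≤ max (y n) (y (n - 1)) := by
    rcases habs with ⟨h1, h2⟩ | ⟨h1, h2⟩
    · exact main _ _ hopp h1 h2
    · rw [min_comm, max_comm]
      exact main _ _ (by rwa [mul_comm]) h1 h2
  rintro (h | h)
  · exact absurd h (not_lt.2 hmm.1)
  · exact absurd h (not_lt.2 hmm.2)

/-- Every excursion after which `T` is still unexplored precedes the discovery of `T`. -/
lemma sum_indicator_le_lsPrefix {y : ℤ → ℝ} (hy : IsLSStrategy y) (p : ℤ) (N : ℕ) (T : ℝ) :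
    ∑ i ∈ Finset.range N, (unexplored y (p - i)).indicator
      (fun _ => ENNReal.ofReal |y (p - i)|) T ≤ lsPrefix y T := by
  refine le_iInf₂ fun j hj => ?_
  have hinj : Function.Injective fun i : ℕ => p - (i : ℤ) := fun a b hab => by
    simp only at hab; omega
  refine le_trans (le_trans (Finset.sum_le_sum fun i _ => ?_) (ENNReal.sum_le_tsum _))
    (ENNReal.tsum_comp_le_tsum_of_injective hinj
      fun m : ℤ => if m < j then ENNReal.ofReal |y m| else 0)
  by_cases hm : T ∈ unexplored y (p - i)
  · rw [if_pos, indicator_of_mem hm]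
    by_contra hc
    exact notMem_unexplored hy (not_lt.1 hc) hj.1 hj.2 hm
  · rw [indicator_of_notMem hm]
    exact zero_le

/-! ### The potential inequality -/

/-- Mass of density `h` on `[-A, 0)` outside `[-a, 0)`. -/
noncomputable def leftMass (A h a : ℝ) : ℝ := h * max (A - a) 0

/-- Mass of density `k` on `(0, B]` outside `(0, b]`, plus an atom of mass `m` at `1` as long as
`b < 1`. -/
noncomputable def rightMass (B k m b : ℝ) : ℝ := k * max (B - b) 0 + if b < 1 then m else 0

lemma leftMass_nonneg {A h a : ℝ} (hh : 0 ≤ h) : 0 ≤ leftMass A h a :=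
  mul_nonneg hh (le_max_right _ _)

lemma rightMass_nonneg {B k m b : ℝ} (hk : 0 ≤ k) (hm : 0 ≤ m) : 0 ≤ rightMass B k m b := by
  unfold rightMass
  have := mul_nonneg hk (le_max_right (B - b) 0)
  split_ifs <;> linarith

/-- `leftMass` is a lower bound for the remaining cost before an excursion to the right: going
right to `b` and then left from `-a` to `-a'` decreases it by no more than the cost incurred. -/
lemma potential_step {A B h k m a a' b : ℝ} (hA : 0 < A) (hh : 0 ≤ h) (hk : 0 ≤ k)
    (hm : 0 ≤ m) (hkB : k * B = h - m) (hAB : h * A + m = A * k)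
    (ha : 0 < a) (haa : a ≤ a') (hb : 0 < b) :
    leftMass A h a ≤ b * (leftMass A h a + rightMass B k m b) +
      a' * (leftMass A h a' + rightMass B k m b) + leftMass A h a' := by
  have hF := leftMass_nonneg (A := A) (a := a) hh
  have hF' := leftMass_nonneg (A := A) (a := a') hh
  have hg := rightMass_nonneg (B := B) (b := b) hk hm
  have ha' : 0 < a' := ha.trans_le haa
  rcases le_or_gt A a with hAa | hAa
  · have h0 : leftMass A h a = 0 := by
      unfold leftMass; rw [max_eq_right (by linarith), mul_zero]
    rw [h0] at hF ⊢
    positivity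
  rcases le_or_gt 1 b with hb1 | hb1
  · have := mul_le_mul_of_nonneg_right hb1 hF
    nlinarith [mul_nonneg hb.le hg, mul_nonneg ha'.le (add_nonneg hF' hg)]
  have hFa : leftMass A h a = h * (A - a) := by
    unfold leftMass; rw [max_eq_left (by linarith)]
  -- the strategy that explores `[0, b]` first and then all of `[-A, 0)`
  have hstar : leftMass A h a ≤ b * (leftMass A h a + rightMass B k m b) +
      A * rightMass B k m b := by
    have hge : (1 - b) * (h * A) ≤ (A + b) * rightMass B k m b := by
      unfold rightMass
      rw [if_pos hb1]
      rcases le_or_gt b B with hbB | hbB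
      · -- concave in `b` and vanishing at `b = 0` and `b = B`
        rw [max_eq_left (by linarith)]
        have : (A + b) * (k * (B - b) + m) - (1 - b) * (h * A) = k * b * (B - b) := by
          linear_combination A * hkB + b * hAB
        nlinarith [mul_nonneg (mul_nonneg hk hb.le) (sub_nonneg.2 hbB)]
      · rw [max_eq_right (by linarith)]
        have h0 : (A + B) * m = (1 - B) * (h * A) := by
          linear_combination B * hAB + A * hkB
        have h1 : 0 ≤ (b - B) * (m + h * A) :=
          mul_nonneg (by linarith) (add_nonneg hm (mul_nonneg hh hA.le))
        nlinarith
    have h2 : (1 - b) * leftMass A h a ≤ (1 - b) * (h * A) := by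
      rw [hFa]
      exact mul_le_mul_of_nonneg_left (by nlinarith) (by linarith)
    nlinarith
  generalize rightMass B k m b = g at *
  rcases le_or_gt A a' with hAa' | hAa'
  · nlinarith [mul_nonneg ha'.le hF', mul_le_mul_of_nonneg_right hAa' hg]
  have hFa' : leftMass A h a' = h * (A - a') := by
    unfold leftMass; rw [max_eq_left (by linarith)]
  have hbpos : 0 ≤ b * (leftMass A h a + g) := mul_nonneg hb.le (add_nonneg hF hg)
  -- the remaining terms are concave in `a' ∈ [a, A]`: compare with the end points
  have hconc : (A - a') * leftMass A h a + (a' - a) * (A * g) ≤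
      (A - a) * (a' * (leftMass A h a' + g) + leftMass A h a') := by
    rw [hFa, hFa']
    have e : (A - a) * (a' * (h * (A - a') + g) + h * (A - a')) -
        ((A - a') * (h * (A - a)) + (a' - a) * (A * g)) =
        (A - a) * a' * (h * (A - a')) + g * a * (A - a') := by ring
    have : 0 ≤ (A - a) * a' * (h * (A - a')) + g * a * (A - a') := by
      have h1 : 0 ≤ A - a := by linarith
      have h2 : 0 ≤ A - a' := by linarith
      positivity
    linarith
  have hAa0 : 0 < A - a := by linarith
  have h3 : (A - a) * leftMass A h a ≤ (A - a) * (b * (leftMass A h a + g) +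
      (a' * (leftMass A h a' + g) + leftMass A h a')) := by
    have h4 : (a' - a) * leftMass A h a ≤ (a' - a) * (b * (leftMass A h a + g) + A * g) :=
      mul_le_mul_of_nonneg_left hstar (by linarith)
    nlinarith [mul_nonneg (show 0 ≤ A - a' by linarith) hbpos]
  have := le_of_mul_le_mul_left h3 hAa0
  linarith

/-! ### The cost against the hard distribution of targets -/

/-- Density `h` on `[-A, 0)` and density `k` on `(0, B]`. -/
noncomputable def contMeasure (A B h k : ℝ) : Measure ℝ :=
  ENNReal.ofReal h • volume.restrict (Ico (-A) 0) + ENNReal.ofReal k • volume.restrict (Ioc 0 B)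

/-- The hard distribution of targets (not normalized): `contMeasure` plus an atom at `1`. -/
noncomputable def hardMeasure (A B h k m : ℝ) : Measure ℝ :=
  contMeasure A B h k + ENNReal.ofReal m • Measure.dirac 1

instance (A B h k : ℝ) : SFinite (contMeasure A B h k) := by
  unfold contMeasure; infer_instance

instance (A B h k m : ℝ) : SFinite (hardMeasure A B h k m) := by
  unfold hardMeasure; infer_instance

lemma hardMeasure_unexplored_ge {A B h k m a b : ℝ} (hh : 0 ≤ h) (hk : 0 ≤ k)
    (ha : 0 < a) (hb : 0 < b) :
    ENNReal.ofReal (leftMass A h a + rightMass B k m b) ≤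
      hardMeasure A B h k m (Iio (-a) ∪ Ioi b) := by
  have hmeas : MeasurableSet (Iio (-a) ∪ Ioi b) := measurableSet_Iio.union measurableSet_Ioi
  simp only [hardMeasure, contMeasure, Measure.add_apply, Measure.smul_apply, smul_eq_mul,
    Measure.restrict_apply hmeas, Measure.dirac_apply' _ hmeas]
  have h1 : ENNReal.ofReal (leftMass A h a) ≤
      ENNReal.ofReal h * volume ((Iio (-a) ∪ Ioi b) ∩ Ico (-A) 0) := by
    unfold leftMass
    rw [ENNReal.ofReal_mul hh]
    gcongr
    refine le_trans ?_ (measure_mono (show Ico (-A) (-a) ⊆ _ from fun x hx =>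
      ⟨Or.inl hx.2, hx.1, lt_trans hx.2 (by linarith)⟩))
    rw [Real.volume_Ico, show -a - -A = A - a by ring]
    rcases max_cases (A - a) 0 with ⟨e, _⟩ | ⟨e, _⟩ <;> rw [e]
    simp
  have h2 : ENNReal.ofReal (k * max (B - b) 0) ≤
      ENNReal.ofReal k * volume ((Iio (-a) ∪ Ioi b) ∩ Ioc 0 B) := by
    rw [ENNReal.ofReal_mul hk]
    gcongr
    refine le_trans ?_ (measure_mono (show Ioc b B ⊆ _ from fun x hx =>
      ⟨Or.inr hx.1, lt_trans hb hx.1, hx.2⟩))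
    rw [Real.volume_Ioc]
    rcases max_cases (B - b) 0 with ⟨e, _⟩ | ⟨e, _⟩ <;> rw [e]
    simp
  have h3 : ENNReal.ofReal (if b < 1 then m else 0) ≤
      ENNReal.ofReal m * (Iio (-a) ∪ Ioi b).indicator 1 (1 : ℝ) := by
    split_ifs with hb1
    · rw [indicator_of_mem (show (1 : ℝ) ∈ Iio (-a) ∪ Ioi b from Or.inr hb1)]; simp
    · simp
  unfold rightMass
  refine le_trans (ENNReal.ofReal_add_le.trans ?_) (add_le_add (add_le_add h1 h2) h3)
  rw [add_assoc]
  gcongr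
  exact ENNReal.ofReal_add_le

/-- Telescoping of `potential_step` backwards from an excursion `p` beyond `1`. The `i`-th
excursion before `p` leaves explored `[-a, b]` with `a`, `b` the absolute values of `y (p - i)` and
`y (p - i - 1)` in the order given by the parity of `i`. -/
lemma potential_telescope {A B h k m : ℝ} (hA : 0 < A) (hh : 0 ≤ h) (hk : 0 ≤ k)
    (hm : 0 ≤ m) (hkB : k * B = h - m) (hAB : h * A + m = A * k)
    {y : ℤ → ℝ} (hy : IsLSStrategy y) {p : ℤ} (hp : 1 ≤ y p) (K : ℕ) :
    ENNReal.ofReal (leftMass A h (-y (p - 1 - 2 * K))) ≤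
      ∑ i ∈ Finset.range (2 * K + 1), ENNReal.ofReal |y (p - i)| *
        hardMeasure A B h k m (unexplored y (p - i)) := by
  have hp0 : 0 < y p := by linarith
  have hU : ∀ {n : ℤ} {a b : ℝ}, 0 < a → 0 < b →
      (y n = b ∧ y (n - 1) = -a ∨ y n = -a ∧ y (n - 1) = b) →
      ENNReal.ofReal (leftMass A h a + rightMass B k m b) ≤
        hardMeasure A B h k m (unexplored y n) := by
    intro n a b ha hb hn
    refine (hardMeasure_unexplored_ge hh hk ha hb).trans (le_of_eq ?_)
    unfold unexplored
    rcases hn with ⟨h1, h2⟩ | ⟨h1, h2⟩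
    · rw [h1, h2, min_eq_right (by linarith), max_eq_left (by linarith)]
    · rw [h1, h2, min_eq_left (by linarith), max_eq_right (by linarith)]
  induction K with
  | zero =>
    have hs := (hy.signs hp0 0).2
    simp only [Nat.cast_zero, mul_zero, sub_zero, zero_add, Finset.range_one,
      Finset.sum_singleton] at hs ⊢
    refine le_trans ?_ (mul_le_mul_right (hU (a := -y (p - 1)) (b := y p) (by linarith) hp0
      (Or.inl ⟨rfl, by ring⟩)) _)
    rw [← ENNReal.ofReal_mul (abs_nonneg _), abs_of_pos hp0]
    apply ENNReal.ofReal_le_ofReal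
    nlinarith [leftMass_nonneg (A := A) (a := -y (p - 1)) hh,
      mul_nonneg hp0.le (rightMass_nonneg (B := B) (b := y p) hk hm)]
  | succ K ih =>
    obtain ⟨-, hs1⟩ := hy.signs hp0 K
    obtain ⟨hs2, hs3⟩ := hy.signs hp0 (K + 1)
    have hmono := (hy (p - 1 - 2 * (K + 1 : ℕ))).2.2
    rw [show p - 1 - 2 * ((K + 1 : ℕ) : ℤ) + 2 = p - 1 - 2 * K by push_cast; ring,
      abs_of_neg hs3, abs_of_neg hs1] at hmono
    rw [show 2 * (K + 1) + 1 = 2 * K + 1 + 1 + 1 by ring, Finset.sum_range_succ,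
      Finset.sum_range_succ]
    rw [show p - ((2 * K + 1 : ℕ) : ℤ) = p - 1 - 2 * K by push_cast; ring,
      show p - ((2 * K + 1 + 1 : ℕ) : ℤ) = p - 2 * (K + 1 : ℕ) by push_cast; ring]
    have e1 : p - 1 - 2 * (K : ℤ) - 1 = p - 2 * (K + 1 : ℕ) := by push_cast; ring
    have e2 : p - 2 * ((K + 1 : ℕ) : ℤ) - 1 = p - 1 - 2 * (K + 1 : ℕ) := by ring
    have u1 := hU (n := p - 1 - 2 * (K : ℤ)) (neg_pos.2 hs1) hs2
      (Or.inr ⟨by ring, by rw [e1]⟩)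
    have u2 := hU (n := p - 2 * ((K + 1 : ℕ) : ℤ)) (neg_pos.2 hs3) hs2
      (Or.inl ⟨rfl, by rw [e2]; ring⟩)
    refine le_trans ?_ (add_le_add (add_le_add ih (mul_le_mul_right u1 _))
      (mul_le_mul_right u2 _))
    rw [← ENNReal.ofReal_mul (abs_nonneg _), ← ENNReal.ofReal_mul (abs_nonneg _),
      abs_of_pos hs2, abs_of_neg hs1]
    have hstep := potential_step hA hh hk hm hkB hAB (neg_pos.2 hs3) hmono.le hs2
    refine (ENNReal.ofReal_le_ofReal (hstep.trans (le_of_eq ?_))).trans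
      (ENNReal.ofReal_add_le.trans (add_le_add_left ENNReal.ofReal_add_le _))
    ring

lemma lintegral_lsPrefix_ge {A B h k m : ℝ} (hA : 0 < A) (hh : 0 ≤ h) (hk : 0 ≤ k)
    (hm : 0 ≤ m) (hkB : k * B = h - m) (hAB : h * A + m = A * k)
    {y : ℤ → ℝ} (hy : IsLSStrategy y) (hfin : lsPrefix y 1 ≠ ⊤) :
    ENNReal.ofReal (h * A) ≤ ∫⁻ T, lsPrefix y T ∂(hardMeasure A B h k m) := by
  -- an excursion beyond `1` with finite prefix sum
  obtain ⟨p, hp, hsum⟩ : ∃ p : ℤ, 1 ≤ y p ∧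
      ∑' j : ℤ, (if j < p then ENNReal.ofReal |y j| else 0) ≠ ⊤ := by
    by_contra hc
    push Not at hc
    apply hfin
    unfold lsPrefix
    rw [iInf_eq_top]
    intro p
    rw [iInf_eq_top]
    rintro ⟨h1, h2⟩
    apply hc
    have hpos : 0 < y p := by
      by_contra h0
      rcases (not_lt.1 h0).eq_or_lt with h0 | h0
      · exact (hy p).1 h0
      · rw [Real.sign_of_neg h0, Real.sign_one] at h1; norm_num at h1
    rwa [abs_one, abs_of_pos hpos] at h2
  have hp0 : 0 < y p := by linarith
  have hlim : Filter.Tendsto (fun K : ℕ => -y (p - 1 - 2 * K)) Filter.atTop (nhds 0) := by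
    have hinj : Function.Injective fun K : ℕ => p - 1 - 2 * (K : ℤ) := fun a b hab => by
      simp only at hab; omega
    have h1 := (ENNReal.tendsto_cofinite_zero_of_tsum_ne_top hsum).comp hinj.tendsto_cofinite
    rw [Nat.cofinite_eq_atTop] at h1
    have h2 := (ENNReal.tendsto_toReal ENNReal.zero_ne_top).comp h1
    rw [ENNReal.toReal_zero] at h2
    refine h2.congr fun K => ?_
    simp only [Function.comp_apply]
    rw [if_pos (by omega), ENNReal.toReal_ofReal (abs_nonneg _), abs_of_neg (hy.signs hp0 K).2]
  have hlim2 : Filter.Tendsto (fun K : ℕ => ENNReal.ofReal (leftMass A h (-y (p - 1 - 2 * K))))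
      Filter.atTop (nhds (ENNReal.ofReal (h * A))) := by
    have hc : Continuous fun a : ℝ => ENNReal.ofReal (leftMass A h a) := by
      unfold leftMass
      exact ENNReal.continuous_ofReal.comp (by fun_prop)
    have := (hc.tendsto 0).comp hlim
    rwa [show leftMass A h 0 = h * A by simp [leftMass, max_eq_left hA.le]] at this
  refine le_of_tendsto' hlim2 fun K =>
    (potential_telescope hA hh hk hm hkB hAB hy hp K).trans ?_
  calc ∑ i ∈ Finset.range (2 * K + 1), ENNReal.ofReal |y (p - i)| *
        hardMeasure A B h k m (unexplored y (p - i))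
      = ∫⁻ T, ∑ i ∈ Finset.range (2 * K + 1), (unexplored y (p - i)).indicator
          (fun _ => ENNReal.ofReal |y (p - i)|) T ∂(hardMeasure A B h k m) := by
        rw [lintegral_finsetSum _ fun i _ =>
          measurable_const.indicator (measurableSet_unexplored y _)]
        refine Finset.sum_congr rfl fun i _ => ?_
        rw [lintegral_indicator_const (measurableSet_unexplored y _)]
    _ ≤ _ := lintegral_mono fun T => sum_indicator_le_lsPrefix hy p _ T

lemma lintegral_abs_contMeasure {A B h k : ℝ} (hA : 0 ≤ A) (hB : 0 ≤ B) (hh : 0 ≤ h)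
    (hk : 0 ≤ k) :
    ∫⁻ T, ENNReal.ofReal |T| ∂(contMeasure A B h k) =
      ENNReal.ofReal (h * (A ^ 2 / 2) + k * (B ^ 2 / 2)) := by
  have hA' : ∫⁻ T in Ico (-A) 0, ENNReal.ofReal |T| = ENNReal.ofReal (A ^ 2 / 2) := by
    rw [restrict_Ico_eq_restrict_Ioc,
      ← ofReal_integral_eq_lintegral_ofReal
        ((continuous_abs.integrableOn_Icc).mono_set Ioc_subset_Icc_self)
        (Filter.Eventually.of_forall fun _ => abs_nonneg _),
      ← intervalIntegral.integral_of_le (by linarith)]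
    rw [intervalIntegral.integral_congr (g := fun x => -x) fun x hx => ?_]
    · rw [intervalIntegral.integral_neg, integral_id]
      congr 1; ring
    · rw [uIcc_of_le (by linarith)] at hx
      exact abs_of_nonpos hx.2
  have hB' : ∫⁻ T in Ioc 0 B, ENNReal.ofReal |T| = ENNReal.ofReal (B ^ 2 / 2) := by
    rw [← ofReal_integral_eq_lintegral_ofReal
        ((continuous_abs.integrableOn_Icc).mono_set Ioc_subset_Icc_self)
        (Filter.Eventually.of_forall fun _ => abs_nonneg _),
      ← intervalIntegral.integral_of_le (by linarith)]
    rw [intervalIntegral.integral_congr (g := fun x => x) fun x hx => ?_]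
    · rw [integral_id]
      congr 1; ring
    · rw [uIcc_of_le (by linarith)] at hx
      exact abs_of_nonneg hx.1
  unfold contMeasure
  rw [lintegral_add_measure, lintegral_smul_measure, lintegral_smul_measure, hA', hB',
    ENNReal.ofReal_add (by positivity) (by positivity), ENNReal.ofReal_mul hh,
    ENNReal.ofReal_mul hk]
  rfl

/-! ### Averaging over strategies -/

/-- The averaged inequality: consistency cost at `1` and robustness ratio `R` cannot both be
small. -/
lemma averaged_bound {A B h k m : ℝ} (hA : 0 < A) (hB : 0 < B) (hh : 0 ≤ h) (hk : 0 ≤ k)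
    (hm : 0 ≤ m) (hkB : k * B = h - m) (hAB : h * A + m = A * k)
    (μ : Measure (ℤ → ℝ)) [IsProbabilityMeasure μ] (hvalid : ∀ᵐ y ∂μ, IsLSStrategy y)
    (hfin : lsCost μ 1 ≠ ⊤) (R : ℝ≥0∞)
    (hR : ∀ T : ℝ, T ≠ 0 → lsCost μ T ≤ R * ENNReal.ofReal |T|) :
    ENNReal.ofReal (m + (h * (A ^ 2 / 2) + k * (B ^ 2 / 2)) + 2 * (h * A)) ≤
      ENNReal.ofReal m * lsCost μ 1 +
        R * ENNReal.ofReal (h * (A ^ 2 / 2) + k * (B ^ 2 / 2)) := by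
  have habsm : Measurable fun T : ℝ => ENNReal.ofReal |T| :=
    continuous_abs.measurable.ennreal_ofReal
  have habs := lintegral_abs_contMeasure hA.le hB.le hh hk
  have hM0 : 0 ≤ h * (A ^ 2 / 2) + k * (B ^ 2 / 2) := by positivity
  generalize h * (A ^ 2 / 2) + k * (B ^ 2 / 2) = M at habs hM0 ⊢
  have hmeas1 : Measurable fun y : ℤ → ℝ => lsDetCost y 1 :=
    measurable_lsDetCost.comp (g := fun p : (ℤ → ℝ) × ℝ => lsDetCost p.1 p.2)
      (f := fun y => (y, (1 : ℝ))) (measurable_id.prodMk measurable_const)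
  have hfin' : ∀ᵐ y ∂μ, lsDetCost y 1 < ⊤ := ae_lt_top hmeas1 hfin
  have habs' : ∫⁻ T, ENNReal.ofReal |T| ∂(hardMeasure A B h k m) = ENNReal.ofReal (m + M) := by
    unfold hardMeasure
    rw [lintegral_add_measure, lintegral_smul_measure, lintegral_dirac, habs, abs_one,
      ENNReal.ofReal_one, smul_eq_mul, mul_one, ENNReal.ofReal_add hm hM0, add_comm]
  have hdet : ∀ᵐ y ∂μ, ENNReal.ofReal (m + M + 2 * (h * A)) ≤
      ∫⁻ T, lsDetCost y T ∂(hardMeasure A B h k m) := by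
    filter_upwards [hvalid, hfin'] with y hy hy1
    have hy2 : lsPrefix y 1 ≠ ⊤ := by
      intro htop
      rw [lsDetCost_eq, htop] at hy1
      simp at hy1
    have := lintegral_lsPrefix_ge hA hh hk hm hkB hAB hy hy2
    simp only [lsDetCost_eq]
    rw [lintegral_add_left habsm, habs', lintegral_const_mul' _ _ (by norm_num),
      ENNReal.ofReal_add (by positivity) (by positivity),
      ENNReal.ofReal_mul (by norm_num : (0 : ℝ) ≤ 2)]
    gcongr
    simp
  calc ENNReal.ofReal (m + M + 2 * (h * A))
      = ∫⁻ _, ENNReal.ofReal (m + M + 2 * (h * A)) ∂μ := by simp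
    _ ≤ ∫⁻ y, ∫⁻ T, lsDetCost y T ∂(hardMeasure A B h k m) ∂μ := lintegral_mono_ae hdet
    _ = ∫⁻ T, lsCost μ T ∂(hardMeasure A B h k m) :=
        by
        unfold lsCost
        refine lintegral_lintegral_swap (f := fun y T => lsDetCost y T) ?_
        exact measurable_lsDetCost.aemeasurable
    _ = ∫⁻ T, lsCost μ T ∂(contMeasure A B h k) + ENNReal.ofReal m * lsCost μ 1 := by
        unfold hardMeasure
        rw [lintegral_add_measure, lintegral_smul_measure, lintegral_dirac, smul_eq_mul]
    _ ≤ ∫⁻ T, R * ENNReal.ofReal |T| ∂(contMeasure A B h k) + ENNReal.ofReal m * lsCost μ 1 := by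
        refine add_le_add_left (lintegral_mono_ae ?_) _
        have hnull : contMeasure A B h k {0} = 0 := by simp [contMeasure]
        filter_upwards [compl_mem_ae_iff.2 hnull] with T hT using hR T hT
    _ = _ := by rw [lintegral_const_mul _ habsm, habs, add_comm]

theorem linear_search_lower_bound
    (t : ℝ) (ht : t ∈ Set.Ioc (0 : ℝ) 1)
    (μ : Measure (ℤ → ℝ)) (hprob : IsProbabilityMeasure μ)
    (hvalid : ∀ᵐ y ∂μ, IsLSStrategy y)
    (hcons : lsCost μ 1 ≤
      ENNReal.ofReal (1 + 2 * t * (t + 2) ^ 2 / (-t ^ 3 + 3 * t + 4))) :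
    ENNReal.ofReal (1 + 4 * (t ^ 2 + t + 1) / (t * (-t ^ 3 + 3 * t + 4))) ≤
      ⨆ (T : ℝ) (_ : T ≠ 0), lsCost μ T / ENNReal.ofReal |T| := by
  obtain ⟨ht0, ht1⟩ := ht
  have hD : 0 < -t ^ 3 + 3 * t + 4 := by
    have : t ^ 3 ≤ 1 := pow_le_one₀ ht0.le ht1
    linarith
  have hh : 0 < 1 + t + t ^ 2 := by positivity
  have hA : 0 < t * (t + 2) / (1 + t + t ^ 2) := by positivity
  have hB : 0 < t ^ 2 * (t + 2) / (1 + t + t ^ 2) := by positivity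
  have hk : 0 < (1 + 2 * t) * (1 + t + t ^ 2) / (t * (t + 2)) := by positivity
  have hm : 0 ≤ 1 - t ^ 2 := by nlinarith
  set R := ⨆ (T : ℝ) (_ : T ≠ 0), lsCost μ T / ENNReal.ofReal |T| with hRdef
  have hR : ∀ T : ℝ, T ≠ 0 → lsCost μ T ≤ R * ENNReal.ofReal |T| := by
    intro T hT
    have h1 : lsCost μ T / ENNReal.ofReal |T| ≤ R :=
      le_iSup₂ (f := fun (T : ℝ) (_ : T ≠ 0) => lsCost μ T / ENNReal.ofReal |T|) T hT
    rwa [ENNReal.div_le_iff (by simpa using hT) ENNReal.ofReal_ne_top] at h1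
  have key := averaged_bound hA hB hh.le hk.le hm (by field_simp; ring) (by field_simp; ring)
    μ hvalid (ne_top_of_le_ne_top ENNReal.ofReal_ne_top hcons) R hR
  have hmom : (1 + t + t ^ 2) * ((t * (t + 2) / (1 + t + t ^ 2)) ^ 2 / 2) +
      (1 + 2 * t) * (1 + t + t ^ 2) / (t * (t + 2)) *
        ((t ^ 2 * (t + 2) / (1 + t + t ^ 2)) ^ 2 / 2) = t ^ 2 * (t + 2) := by
    field_simp; ring
  have hc : (1 + t + t ^ 2) * (t * (t + 2) / (1 + t + t ^ 2)) = t * (t + 2) := by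
    field_simp
  rw [hmom, hc] at key
  have hχ : 0 ≤ 1 + 2 * t * (t + 2) ^ 2 / (-t ^ 3 + 3 * t + 4) := by positivity
  have hρ : 0 ≤ 1 + 4 * (t ^ 2 + t + 1) / (t * (-t ^ 3 + 3 * t + 4)) := by positivity
  -- the consistency and robustness bounds lie on the line given by `averaged_bound`
  have hline : 1 - t ^ 2 + t ^ 2 * (t + 2) + 2 * (t * (t + 2)) =
      (1 - t ^ 2) * (1 + 2 * t * (t + 2) ^ 2 / (-t ^ 3 + 3 * t + 4)) +
      (1 + 4 * (t ^ 2 + t + 1) / (t * (-t ^ 3 + 3 * t + 4))) * (t ^ 2 * (t + 2)) := by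
    have hD' := hD.ne'
    generalize hE : -t ^ 3 + 3 * t + 4 = E at hD' ⊢
    field_simp
    rw [← hE]
    ring
  rw [hline, ENNReal.ofReal_add (mul_nonneg hm hχ) (by positivity), ENNReal.ofReal_mul hm,
    ENNReal.ofReal_mul hρ] at key
  have key2 := key.trans (add_le_add_left (mul_le_mul_right hcons (ENNReal.ofReal (1 - t ^ 2))) _)
  have hfin : ENNReal.ofReal (1 - t ^ 2) *
      ENNReal.ofReal (1 + 2 * t * (t + 2) ^ 2 / (-t ^ 3 + 3 * t + 4)) ≠ ⊤ :=
    ENNReal.mul_ne_top ENNReal.ofReal_ne_top ENNReal.ofReal_ne_top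
  have key3 := (ENNReal.add_le_add_iff_left hfin).1 key2
  have hM : 0 < t ^ 2 * (t + 2) := by positivity
  exact (ENNReal.mul_le_mul_iff_left (ENNReal.ofReal_pos.2 hM).ne' ENNReal.ofReal_ne_top).1 key3
end
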